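/- arXiv:2109.14179 — 9 statements merged into one kernel-verified Lean document; each statement's English description precedes it below -/
import Mathlib

section
/- Let F ⊆ ℤ³ be an exact cluster which is a prism whose foundation has prime cardinality. Then there exists a 2-periodic F-tiling of ℤ³. -/
/-!
The foundation `B` has prime cardinality `p`, and `F = B ⊕ Ng` for a finite set `N` of integers.
If `T` is an `F`-tiling, then `T' = T ⊕ Ng` is a `B`-tiling.

*Periodicity of `T'`.* Modulo `p`, the `p`-th convolution power of `1_B` is the indicator of `pB`
(Frobenius), so convolving `1_B * 1_{T'} = 1` further with `1_B` gives
`∑_{b ∈ B} 1_{T'}(x - pb) ≡ 0 (mod p)`. A sum of `p` zeros and ones divisible by `p` has all its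
terms equal, so `T'` is invariant under `p(b - b')` for all `b, b' ∈ B`
(`sub_prime_nsmul_mem_iff`), that is, under `pV` where `V` is the span of `B - B`.

*Making tilings periodic.* If `Γ` and `M` are subgroups with trivial intersection, there is a map
`π` into `Γ` that is `Γ`-equivariant and `M`-invariant (`exists_equivariant_map`). Replacing a set
`T` by `{x | x - π x ∈ T}` makes it `Γ`-invariant and on every coset of `M` replaces `T` by a
translate of its restriction to some other coset. This is used twice. Let `W` be a maximal subgroup
of `ℤ³` meeting `V + ℤg` trivially; then `V + W` has rank 2 and meets `ℤg` trivially. With `Γ = W`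
and `M = V + ℤg`, which contains `F - F`, the tiling becomes `W`-invariant. With `Γ = p(V + W)` and
`M = ℤg`, the set `T' = T ⊕ Ng`, already invariant under `Γ`, is kept, while `T` becomes
`Γ`-invariant.
-/

/-- `T` is an `F`-tiling of `ℤ³`: every point of `ℤ³` is uniquely expressible as `a + t`
with `a ∈ F`, `t ∈ T`. -/
def IsTiling (F T : Set (Fin 3 → ℤ)) : Prop :=
  ∀ q : Fin 3 → ℤ, ∃! p : (Fin 3 → ℤ) × (Fin 3 → ℤ), p.1 ∈ F ∧ p.2 ∈ T ∧ q = p.1 + p.2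

/-- `S ⊆ ℤ³` is `i`-periodic: invariant under some rank-`i` subgroup of `ℤ³`. -/
def PeriodicOfRank (i : ℕ) (S : Set (Fin 3 → ℤ)) : Prop :=
  ∃ Λ : Submodule ℤ (Fin 3 → ℤ), Module.finrank ℤ Λ = i ∧
    ∀ g ∈ Λ, (fun x => g + x) '' S = S

/-- `S ⊆ ℤ³` is a prism with a foundation of cardinality `c`: there are a rank-2 subgroup
`Λ` of `ℤ³` (the base), a nonzero vector `g` with `ℤg + Λ` of rank 3 (the axis), a vector
`h` and integers `0 = n₀, n₁, …, n_k` with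
`S = ⋃ᵢ (nᵢ • g + ((h + Λ) ∩ S))`, where the foundation `(h + Λ) ∩ S` has cardinality `c`. -/
def IsPrismWithFoundationCard (S : Set (Fin 3 → ℤ)) (c : ℕ) : Prop :=
  ∃ (Λ : Submodule ℤ (Fin 3 → ℤ)) (g h : Fin 3 → ℤ) (k : ℕ) (n : Fin (k + 1) → ℤ),
    Module.finrank ℤ Λ = 2 ∧ g ≠ 0 ∧
    Module.finrank ℤ ↥(Submodule.span ℤ {g} ⊔ Λ) = 3 ∧
    n 0 = 0 ∧
    (S = ⋃ i : Fin (k + 1),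
      (fun x => n i • g + x) '' (((fun x => h + x) '' (Λ : Set (Fin 3 → ℤ))) ∩ S)) ∧
    (((fun x => h + x) '' (Λ : Set (Fin 3 → ℤ))) ∩ S).ncard = c

/-! ### Tilings by a set of prime cardinality -/

section Prime

variable {G : Type*} [AddCommGroup G]

/-- Translation of functions on `G`, as an action of `G` by linear endomorphisms:
`v` sends `f` to `x ↦ f (x - v)`. -/
def translationHom (R G : Type*) [CommRing R] [AddCommGroup G] :
    Multiplicative G →* Module.End R (G → R) where
  toFun v :=
    { toFun := fun f x => f (x - v.toAdd)
      map_add' := fun _ _ => rfl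
      map_smul' := fun _ _ => rfl }
  map_one' := by ext; simp
  map_mul' v w := by
    refine LinearMap.ext fun f => funext fun x => ?_
    simp [sub_sub]

/-- If `B` has prime cardinality `p` and `B ⊕ T = G`, then `T` is invariant under `p (b - b')`
for `b, b' ∈ B`. -/
lemma sub_prime_nsmul_mem_iff {p : ℕ} (hp : p.Prime) (B : Finset G) (hB : B.card = p)
    (T : Set G) (hT : ∀ x, ∃! b, b ∈ B ∧ x - b ∈ T) (x : G) {b b' : G} (hb : b ∈ B)
    (hb' : b' ∈ B) : x - p • b ∈ T ↔ x - p • b' ∈ T := by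
  classical
  have : Fact p.Prime := ⟨hp⟩
  have : CharP (AddMonoidAlgebra (ZMod p) G) p :=
    charP_of_injective_algebraMap (FaithfulSMul.algebraMap_injective (ZMod p) _) p
  let Φ := AddMonoidAlgebra.lift (ZMod p) (Module.End (ZMod p) (G → ZMod p)) G
    (translationHom (ZMod p) G)
  let β : AddMonoidAlgebra (ZMod p) G := ∑ b ∈ B, AddMonoidAlgebra.single b 1
  let f : G → ZMod p := fun x => if x ∈ T then 1 else 0
  have hΦ : ∀ (u : G → ZMod p), Φ β u = fun x => ∑ b ∈ B, u (x - b) := by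
    intro u
    funext x
    simp [Φ, β, translationHom]
  have h1 : Φ β f = fun _ => 1 := by
    rw [hΦ]
    funext x
    obtain ⟨c, ⟨hc, hcT⟩, hu⟩ := hT x
    rw [Finset.sum_eq_single_of_mem c hc]
    · simp [f, hcT]
    · intro d hd hdc
      have : x - d ∉ T := fun h => hdc (hu d ⟨hd, h⟩)
      simp [f, this]
  have h2 : Φ β (fun _ => 1) = 0 := by
    rw [hΦ]
    funext x
    simp [hB]
  have h3 : Φ (β ^ p) f = 0 := by
    obtain ⟨k, rfl⟩ : ∃ k, p = k + 2 := ⟨p - 2, by have := hp.two_le; omega⟩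
    rw [map_pow, pow_add, Module.End.mul_apply, pow_two, Module.End.mul_apply, h1, h2, map_zero]
  have h4 : β ^ p = ∑ b ∈ B, AddMonoidAlgebra.single (p • b) 1 := by
    simp [β, sum_pow_char p, AddMonoidAlgebra.single_pow]
  have h5 : ∑ b ∈ B, f (x - p • b) = 0 := by
    have := congrFun h3 x
    rw [h4] at this
    simpa [Φ, translationHom] using this
  have h6 : p ∣ (B.filter fun b => x - p • b ∈ T).card := by
    rw [← CharP.cast_eq_zero_iff (ZMod p), ← h5]
    simp [f, Finset.sum_boole]
  have h7 : (B.filter fun b => x - p • b ∈ T).card ≤ B.card := Finset.card_filter_le _ _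
  rcases Nat.eq_zero_or_pos (B.filter fun b => x - p • b ∈ T).card with h0 | h0
  · rw [Finset.card_eq_zero, Finset.filter_eq_empty_iff] at h0
    exact iff_of_false (h0 hb) (h0 hb')
  · have h8 : (B.filter fun b => x - p • b ∈ T).card = B.card :=
      le_antisymm h7 (hB.le.trans (Nat.le_of_dvd h0 h6))
    rw [Finset.card_filter_eq_iff] at h8
    exact iff_of_true (h8 b hb) (h8 b' hb')

end Prime

/-! ### Periods and equivariant maps -/

section Periods

variable {G : Type*} [AddCommGroup G]

/-- The group of periods of a subset `S` of an abelian group. -/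
def periods (S : Set G) : Submodule ℤ G :=
  AddSubgroup.toIntSubmodule
    { carrier := {v | ∀ y, y ∈ S ↔ v + y ∈ S}
      zero_mem' := by simp
      add_mem' := by
        intro v w hv hw y
        rw [hw y, hv (w + y), add_assoc]
      neg_mem' := by
        intro v hv y
        rw [hv (-v + y), add_neg_cancel_left] }

lemma mem_periods {S : Set G} {v : G} : v ∈ periods S ↔ ∀ y, y ∈ S ↔ v + y ∈ S := Iff.rfl

lemma image_add_of_mem_periods {S : Set G} {v : G} (h : v ∈ periods S) :
    (fun x => v + x) '' S = S := by
  ext y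
  constructor
  · rintro ⟨x, hx, rfl⟩
    exact (h x).1 hx
  · intro hy
    exact ⟨-v + y, ((neg_mem h) y).1 hy, by simp⟩

/-- The map sends `x` to the `Γ`-component of `x - r`, where `r` is a chosen representative of the
coset `x + (M ⊔ Γ)`. -/
lemma exists_equivariant_map (M Γ : Submodule ℤ G) (h : Disjoint M Γ) :
    ∃ π : G → G, (∀ x, π x ∈ Γ) ∧ (∀ v ∈ Γ, ∀ x, π (v + x) = v + π x) ∧
      ∀ m ∈ M, ∀ x, π (m + x) = π x := by
  let r : G → G := fun x => Quotient.out (Submodule.Quotient.mk x : G ⧸ (M ⊔ Γ))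
  have hr : ∀ x, ∃ c ∈ Γ, x - r x - c ∈ M := by
    intro x
    have : x - r x ∈ M ⊔ Γ := by
      rw [← Submodule.Quotient.eq]
      exact (Quotient.out_eq _).symm
    obtain ⟨m, hm, c, hc, e⟩ := Submodule.mem_sup.1 this
    exact ⟨c, hc, by rw [← e]; simpa using hm⟩
  choose π hπ hπM using hr
  have key : ∀ x y, ∀ v ∈ Γ, y - x - v ∈ M → π y = v + π x := by
    intro x y v hv hxy
    have e : r y = r x := by
      have : (Submodule.Quotient.mk y : G ⧸ (M ⊔ Γ)) = Submodule.Quotient.mk x := by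
        rw [Submodule.Quotient.eq]
        exact Submodule.mem_sup.2 ⟨_, hxy, v, hv, by abel⟩
      simp only [r, this]
    have h1 : π y - (v + π x) ∈ Γ := sub_mem (hπ y) (add_mem hv (hπ x))
    have h2 : π y - (v + π x) ∈ M := by
      have := sub_mem (add_mem (hπM x) hxy) (hπM y)
      rw [e] at this
      convert this using 1
      abel
    exact sub_eq_zero.1 (Submodule.disjoint_def.1 h _ h2 h1)
  refine ⟨π, hπ, fun v hv x => key x _ v hv (by simp), fun m hm x => ?_⟩
  simpa using key x (m + x) 0 (zero_mem _) (by simpa using hm)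

lemma le_periods_twist (Γ : Submodule ℤ G) (T : Set G) (π : G → G)
    (hπ : ∀ v ∈ Γ, ∀ x, π (v + x) = v + π x) : Γ ≤ periods {x | x - π x ∈ T} := by
  intro v hv
  rw [mem_periods]
  intro y
  simp [hπ v hv y]

end Periods

/-! ### Ranks of subgroups of `ℤ³` -/

lemma finrank_sup_add_finrank_inf_int (A B : Submodule ℤ (Fin 3 → ℤ)) :
    Module.finrank ℤ ↥(A ⊔ B) + Module.finrank ℤ ↥(A ⊓ B) =
      Module.finrank ℤ A + Module.finrank ℤ B := by
  have := Submodule.rank_sup_add_rank_inf_eq A B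
  simp only [← Module.finrank_eq_rank] at this
  exact_mod_cast this

lemma finrank_eq_three_of_torsion (A : Submodule ℤ (Fin 3 → ℤ))
    (h : ∀ x, ∃ n : ℤ, n ≠ 0 ∧ n • x ∈ A) : Module.finrank ℤ A = 3 := by
  have h1 := A.finrank_quotient_add_finrank
  have h0 : Module.finrank ℤ ((Fin 3 → ℤ) ⧸ A) = 0 := by
    rw [Module.finrank_eq_zero_iff]
    intro x
    obtain ⟨x, rfl⟩ := A.mkQ_surjective x
    obtain ⟨n, hn, h⟩ := h x
    refine ⟨n, hn, ?_⟩
    rw [← map_smul, Submodule.mkQ_apply, Submodule.Quotient.mk_eq_zero]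
    exact h
  have h3 : Module.finrank ℤ (Fin 3 → ℤ) = 3 := by simp
  omega

/-- Every subgroup of `ℤ³` has a complement up to finite index: a maximal subgroup meeting it
trivially. -/
lemma exists_disjoint_finrank_sup (M : Submodule ℤ (Fin 3 → ℤ)) :
    ∃ W : Submodule ℤ (Fin 3 → ℤ), Disjoint M W ∧ Module.finrank ℤ ↥(M ⊔ W) = 3 := by
  obtain ⟨W, hW, hmax⟩ := WellFounded.has_min
    (wellFounded_gt : WellFounded ((· > ·) : Submodule ℤ (Fin 3 → ℤ) → _ → Prop))
    {W | Disjoint M W} ⟨⊥, disjoint_bot_right⟩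
  refine ⟨W, hW, finrank_eq_three_of_torsion _ fun x => ?_⟩
  by_contra! hx
  have hd : Disjoint M (W ⊔ Submodule.span ℤ {x}) := by
    rw [Submodule.disjoint_def]
    intro v hv hv'
    obtain ⟨w, hw, y, hy, e⟩ := Submodule.mem_sup.1 hv'
    obtain ⟨n, rfl⟩ := Submodule.mem_span_singleton.1 hy
    have hn : n = 0 := by
      by_contra hn
      exact hx n hn (Submodule.mem_sup.2 ⟨v, hv, -w, neg_mem hw, by rw [← e]; abel⟩)
    subst hn
    rw [zero_smul, add_zero] at e
    exact Submodule.disjoint_def.1 hW v hv (e ▸ hw)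
  refine hmax _ hd (lt_of_le_of_ne le_sup_left fun e => ?_)
  refine hx 1 one_ne_zero ?_
  rw [one_smul, e]
  exact Submodule.mem_sup_right (Submodule.mem_sup_right (Submodule.mem_span_singleton_self x))

/-! ### Prisms -/

lemma isTiling_iff {F T : Set (Fin 3 → ℤ)} :
    IsTiling F T ↔ ∀ q, ∃! a, a ∈ F ∧ q - a ∈ T := by
  refine forall_congr' fun q => ⟨?_, ?_⟩
  · rintro ⟨⟨a, t⟩, ⟨ha, ht, e⟩, hu⟩
    dsimp only at ha ht e
    refine ⟨a, ⟨ha, by rw [e]; simpa using ht⟩, fun a' h' => ?_⟩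
    exact congrArg Prod.fst (hu (a', q - a') ⟨h'.1, h'.2, by simp⟩)
  · rintro ⟨a, ⟨ha, ht⟩, hu⟩
    refine ⟨(a, q - a), ⟨ha, ht, by simp⟩, ?_⟩
    rintro ⟨a', t'⟩ ⟨ha', ht', e⟩
    dsimp only at ha' ht' e
    have hqa : q - a' = t' := by rw [e]; simp
    obtain rfl := hu a' ⟨ha', hqa ▸ ht'⟩
    rw [hqa]

/-- If `F - F ⊆ M` and `M` meets `W` trivially, an `F`-tiling can be made `W`-invariant. -/
lemma exists_tiling_le_periods {F T : Set (Fin 3 → ℤ)} (hT : IsTiling F T)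
    (M W : Submodule ℤ (Fin 3 → ℤ)) (hMW : Disjoint M W) (b₀ : Fin 3 → ℤ)
    (hFM : ∀ a ∈ F, a - b₀ ∈ M) :
    ∃ T₁, IsTiling F T₁ ∧ W ≤ periods T₁ := by
  obtain ⟨π, -, hπW, hπM⟩ := exists_equivariant_map M W hMW
  refine ⟨{x | x - π x ∈ T}, ?_, le_periods_twist W T π hπW⟩
  rw [isTiling_iff] at hT ⊢
  intro q
  have key : ∀ a ∈ F, (q - a ∈ {x | x - π x ∈ T} ↔ q - π (q - b₀) - a ∈ T) := by
    intro a ha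
    have e : π (q - b₀) = π (q - a) := by
      rw [← hπM _ (hFM a ha) (q - a)]
      congr 1
      abel
    rw [Set.mem_ofPred_eq, e, sub_right_comm]
  obtain ⟨a, ⟨ha, haT⟩, hu⟩ := hT (q - π (q - b₀))
  exact ⟨a, ⟨ha, (key a ha).2 haT⟩, fun a' h' => hu a' ⟨h'.1, (key a' h'.1).1 h'.2⟩⟩

theorem exists_two_periodic_tiling_of_prism_with_prime_foundation
    (F : Set (Fin 3 → ℤ)) (hF : F.Finite)
    (hprism : ∃ q : ℕ, q.Prime ∧ IsPrismWithFoundationCard F q)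
    (hexact : ∃ T, IsTiling F T) :
    ∃ T : Set (Fin 3 → ℤ), IsTiling F T ∧ PeriodicOfRank 2 T := by
  obtain ⟨p, hp, Λ, g, h, k, n, hΛ, hg, hsup, hn0, hFeq, hcard⟩ := hprism
  obtain ⟨T, hT⟩ := hexact
  set B : Set (Fin 3 → ℤ) := ((fun x => h + x) '' (Λ : Set (Fin 3 → ℤ))) ∩ F with hBdef
  have hFmem : ∀ a, a ∈ F ↔ ∃ i, ∃ b ∈ B, n i • g + b = a := by
    intro a
    constructor
    · intro ha
      rw [hFeq] at ha
      exact Set.mem_iUnion.1 ha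
    · rintro ⟨i, b, hb, rfl⟩
      rw [hFeq]
      exact Set.mem_iUnion.2 ⟨i, b, hb, rfl⟩
  have hBfin : B.Finite := hF.subset Set.inter_subset_right
  have hBΛ : ∀ b ∈ B, ∀ b' ∈ B, b - b' ∈ Λ := by
    rintro _ ⟨⟨x, hx, rfl⟩, -⟩ _ ⟨⟨y, hy, rfl⟩, -⟩
    simpa using sub_mem hx hy
  obtain ⟨b₀, hb₀⟩ : B.Nonempty := by
    rw [← Set.ncard_pos hBfin, hcard]
    exact hp.pos
  clear_value B
  -- The axis is independent of the base.
  have hg1 : Module.finrank ℤ (Submodule.span ℤ {g}) = 1 := by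
    rw [← (LinearEquiv.toSpanNonzeroSingleton ℤ (Fin 3 → ℤ) g hg).finrank_eq]
    simp
  have hgΛ : Disjoint (Submodule.span ℤ {g}) Λ := by
    have := finrank_sup_add_finrank_inf_int (Submodule.span ℤ {g}) Λ
    rw [disjoint_iff]
    exact Submodule.finrank_eq_zero.1 (by omega)
  let V : Submodule ℤ (Fin 3 → ℤ) := Submodule.span ℤ ((fun b => b - b₀) '' B)
  have hVΛ : V ≤ Λ := by
    rw [Submodule.span_le]
    rintro _ ⟨b, hb, rfl⟩
    exact hBΛ b hb b₀ hb₀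
  obtain ⟨W, hMW, hMW3⟩ := exists_disjoint_finrank_sup (V ⊔ Submodule.span ℤ {g})
  have hgU : Disjoint (Submodule.span ℤ {g}) (V ⊔ W) := by
    rw [Submodule.disjoint_def]
    intro x hx hx'
    obtain ⟨v, hv, w, hw, e⟩ := Submodule.mem_sup.1 hx'
    have hw0 : w = 0 := by
      refine Submodule.disjoint_def.1 hMW w ?_ hw
      exact Submodule.mem_sup.2 ⟨-v, neg_mem hv, x, hx, by rw [← e]; abel⟩
    rw [hw0, add_zero] at e
    exact Submodule.disjoint_def.1 hgΛ x hx (e ▸ hVΛ hv)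
  have hU2 : Module.finrank ℤ ↥(V ⊔ W) = 2 := by
    have h1 := finrank_sup_add_finrank_inf_int (Submodule.span ℤ {g}) (V ⊔ W)
    rw [hgU.eq_bot, finrank_bot, ← sup_assoc, sup_comm (Submodule.span ℤ {g}) V, hMW3] at h1
    omega
  obtain ⟨T₁, hT₁, hWT₁⟩ := exists_tiling_le_periods hT _ W hMW b₀ (by
    intro a ha
    obtain ⟨i, b, hb, rfl⟩ := (hFmem a).1 ha
    exact Submodule.mem_sup.2 ⟨b - b₀, Submodule.subset_span ⟨b, hb, rfl⟩, n i • g,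
      Submodule.smul_mem _ _ (Submodule.mem_span_singleton_self g), by abel⟩)
  rw [isTiling_iff] at hT₁
  have hinj : ∀ i j, ∀ b ∈ B, ∀ b' ∈ B, n i • g + b = n j • g + b' → b = b' := by
    intro i j b hb b' hb' e
    have e' : b - b' = (n j - n i) • g := by
      rw [sub_smul, sub_eq_sub_iff_add_eq_add, add_comm, e]
    refine sub_eq_zero.1 (Submodule.disjoint_def.1 hgΛ _ ?_ (hBΛ b hb b' hb'))
    rw [e']
    exact Submodule.smul_mem _ _ (Submodule.mem_span_singleton_self g)
  let T' : Set (Fin 3 → ℤ) := {y | ∃ i, y - n i • g ∈ T₁}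
  have hT' : ∀ x, ∃! b, b ∈ B ∧ x - b ∈ T' := by
    intro x
    obtain ⟨a, ⟨ha, haT⟩, hu⟩ := hT₁ x
    obtain ⟨i, b, hb, rfl⟩ := (hFmem a).1 ha
    refine ⟨b, ⟨hb, i, by rwa [sub_sub, add_comm]⟩, ?_⟩
    rintro b' ⟨hb', j, hj⟩
    refine hinj j i b' hb' b hb (hu _ ⟨(hFmem _).2 ⟨j, b', hb', rfl⟩, ?_⟩)
    rwa [add_comm, ← sub_sub]
  have hWT' : W ≤ periods T' := by
    intro w hw y
    refine exists_congr fun i => ?_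
    rw [add_sub_assoc]
    exact hWT₁ hw _
  let P : (Fin 3 → ℤ) →ₗ[ℤ] (Fin 3 → ℤ) := LinearMap.lsmul ℤ _ (p : ℤ)
  have hP : Function.Injective P := by
    intro x y e
    exact smul_right_injective _ (by exact_mod_cast hp.ne_zero : (p : ℤ) ≠ 0) e
  have hVT' : V ≤ (periods T').comap P := by
    rw [Submodule.span_le]
    rintro _ ⟨b, hb, rfl⟩
    rw [SetLike.mem_coe, Submodule.mem_comap, mem_periods]
    intro y
    have := sub_prime_nsmul_mem_iff hp hBfin.toFinset
      (by rw [← Set.ncard_eq_toFinset_card B hBfin, hcard]) T' (by simpa using hT')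
      (y + p • b) (b := b) (b' := b₀) (by simpa using hb) (by simpa using hb₀)
    have e1 : y + p • b - p • b = y := by abel
    have e2 : y + p • b - p • b₀ = P (b - b₀) + y := by
      simp only [P, LinearMap.lsmul_apply, natCast_zsmul, smul_sub]
      abel
    rwa [e1, e2] at this
  have hUT' : (V ⊔ W).map P ≤ periods T' := by
    rw [Submodule.map_le_iff_le_comap]
    refine sup_le hVT' fun w hw => ?_
    exact Submodule.smul_mem _ _ (hWT' hw)
  have hUU : (V ⊔ W).map P ≤ V ⊔ W := by
    rintro _ ⟨u, hu, rfl⟩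
    exact Submodule.smul_mem _ _ hu
  obtain ⟨π, hπ, hπU, hπg⟩ := exists_equivariant_map _ _ (hgU.mono_right hUU)
  refine ⟨{x | x - π x ∈ T₁}, ?_, (V ⊔ W).map P, ?_, fun v hv =>
    image_add_of_mem_periods (le_periods_twist _ T₁ π hπU hv)⟩
  · rw [isTiling_iff]
    -- `π` is constant on lines in the direction of the axis.
    have key : ∀ q b i, (q - (n i • g + b) ∈ {x | x - π x ∈ T₁} ↔
        (q - π (q - b)) - (n i • g + b) ∈ T₁) := by
      intro q b i
      have e : π (q - b) = π (q - (n i • g + b)) := by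
        rw [← hπg (n i • g) (Submodule.smul_mem _ _ (Submodule.mem_span_singleton_self g))
          (q - (n i • g + b))]
        congr 1
        abel
      rw [Set.mem_ofPred_eq, e, sub_right_comm]
    have key' : ∀ q b, (q - b ∈ T' ↔ q - π (q - b) - b ∈ T') := by
      intro q b
      rw [hUT' (neg_mem (hπ (q - b))) (q - b)]
      have e : -π (q - b) + (q - b) = q - π (q - b) - b := by abel
      rw [e]
    intro q
    obtain ⟨b, ⟨hb, hbT⟩, hu⟩ := hT' q
    obtain ⟨i, hi⟩ := (key' q b).1 hbT
    rw [sub_sub, add_comm b] at hi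
    refine ⟨n i • g + b, ⟨(hFmem _).2 ⟨i, b, hb, rfl⟩, (key q b i).2 hi⟩, ?_⟩
    rintro a ⟨ha, haT⟩
    obtain ⟨j, b', hb', rfl⟩ := (hFmem a).1 ha
    rw [key] at haT
    obtain rfl : b' = b := by
      refine hu b' ⟨hb', (key' q b').2 ⟨j, ?_⟩⟩
      rwa [sub_sub, add_comm b']
    exact (hT₁ (q - π (q - b'))).unique ⟨ha, haT⟩ ⟨(hFmem _).2 ⟨i, b', hb, rfl⟩, hi⟩
  · rw [← (Submodule.equivMapOfInjective P hP (V ⊔ W)).finrank_eq, hU2]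
end

section
/- Let F ⊆ ℤ³ be a cluster and T an F-tiling. Then for every integer α relatively prime to |F|, the set T is also an (αF)-tiling, where αF = {αa : a ∈ F}. -/
namespace Dilation

open Finset

variable {G ι : Type*} [AddCommGroup G] [Fintype ι]

open Classical in
/-- The number of indices `i` such that the translate `v i + T` contains `q`. -/
noncomputable def cover (T : Set G) (v : ι → G) (q : G) : ℕ :=
  ∑ i, if q - v i ∈ T then 1 else 0

/-- The translates `v i + T` partition `G`, indices counted with multiplicity. -/
def Tiles (T : Set G) (v : ι → G) : Prop := ∀ q, cover T v q = 1

lemma tiles_iff (T : Set G) (v : ι → G) : Tiles T v ↔ ∀ q, ∃! i, q - v i ∈ T := by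
  classical
  refine forall_congr' fun q => ?_
  rw [cover, Finset.sum_boole, Nat.cast_id, Finset.card_eq_one]
  simp only [Finset.ext_iff, Finset.mem_filter, Finset.mem_univ, true_and, Finset.mem_singleton]
  constructor
  · rintro ⟨i, hi⟩
    exact ⟨i, (hi i).2 rfl, fun j hj => (hi j).1 hj⟩
  · rintro ⟨i, hi, hu⟩
    exact ⟨i, fun j => ⟨hu j, fun h => h ▸ hi⟩⟩

lemma sum_cover (T : Set G) (v w : ι → G) (q : G) :
    ∑ j, cover T w (q - v j) = ∑ i, cover T v (q - w i) := by
  unfold cover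
  rw [Finset.sum_comm]
  refine Finset.sum_congr rfl fun i _ => Finset.sum_congr rfl fun j _ => ?_
  rw [sub_right_comm]

lemma sum_cover_of_tiles {T : Set G} {v : ι → G} (hv : Tiles T v) (w : ι → G) (q : G) :
    ∑ j, cover T w (q - v j) = ∑ _j : ι, 1 := by
  rw [sum_cover]
  exact Finset.sum_congr rfl fun i _ => hv _

lemma Tiles.nonempty {T : Set G} {v : ι → G} (hv : Tiles T v) : Nonempty ι :=
  ⟨((tiles_iff T v).1 hv 0).choose⟩

lemma tiles_of_one_le {T : Set G} {v w : ι → G} (hv : Tiles T v) (hw : ∀ q, 1 ≤ cover T w q) :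
    Tiles T w := by
  intro q
  obtain ⟨j⟩ := hv.nonempty
  have h := (Finset.sum_eq_sum_iff_of_le (fun i _ => hw (q + v j - v i))).1
    (sum_cover_of_tiles hv w (q + v j)).symm j (Finset.mem_univ j)
  simpa using h.symm

lemma tiles_of_le_one {T : Set G} {v w : ι → G} (hv : Tiles T v) (hw : ∀ q, cover T w q ≤ 1) :
    Tiles T w := by
  intro q
  obtain ⟨j⟩ := hv.nonempty
  have h := (Finset.sum_eq_sum_iff_of_le (fun i _ => hw (q + v j - v i))).1
    (sum_cover_of_tiles hv w (q + v j)) j (Finset.mem_univ j)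
  simpa using h

lemma Tiles.neg {T : Set G} {v : ι → G} (hv : Tiles T v) : Tiles T (fun i => -v i) := by
  classical
  refine tiles_of_le_one hv fun q => ?_
  rw [cover, Finset.sum_boole, Nat.cast_id, Finset.card_le_one]
  intro i hi j hj
  simp only [Finset.mem_filter, Finset.mem_univ, true_and, sub_neg_eq_add] at hi hj
  refine ((tiles_iff T v).1 hv (q + v i + v j)).unique ?_ ?_
  · simpa [add_sub_right_comm] using hj
  · simpa using hi

/-- The translation operators `f ↦ f (· - g)` as a representation of `G` over `R`. -/
def shift (R G : Type*) [CommRing R] [AddCommGroup G] :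
    Multiplicative G →* Module.End R (G → R) where
  toFun g :=
    { toFun := fun f q => f (q - g.toAdd)
      map_add' := fun _ _ => rfl
      map_smul' := fun _ _ => rfl }
  map_one' := by ext; simp
  map_mul' g h := by
    refine LinearMap.ext fun f => funext fun q => ?_
    simp [sub_sub]

/-- The group algebra acting on functions by convolution. -/
noncomputable def conv (R G : Type*) [CommRing R] [AddCommGroup G] :
    AddMonoidAlgebra R G →ₐ[R] Module.End R (G → R) :=
  AddMonoidAlgebra.lift R _ G (shift R G)

/-- The element `∑ i, [v i]` of the group algebra. -/
noncomputable def mask (R : Type*) [CommRing R] (v : ι → G) : AddMonoidAlgebra R G :=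
  ∑ i, AddMonoidAlgebra.single (v i) 1

lemma conv_mask (R : Type*) [CommRing R] (v : ι → G) (f : G → R) (q : G) :
    conv R G (mask R v) f q = ∑ i, f (q - v i) := by
  simp [conv, mask, shift, map_sum, LinearMap.sum_apply, Finset.sum_apply]

lemma conv_mask_indicator (R : Type*) [CommRing R] (T : Set G) (v : ι → G) (q : G) :
    conv R G (mask R v) (T.indicator 1) q = (cover T v q : R) := by
  classical
  rw [conv_mask, cover, Nat.cast_sum]
  exact Finset.sum_congr rfl fun i _ => by simp [Set.indicator_apply]

lemma mask_pow (p : ℕ) [Fact p.Prime] (v : ι → G) :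
    mask (ZMod p) v ^ p = mask (ZMod p) (fun i => p • v i) := by
  have : CharP (AddMonoidAlgebra (ZMod p) G) p :=
    charP_of_injective_algebraMap (algebraMap (ZMod p) _).injective p
  simp [mask, sum_pow_char, AddMonoidAlgebra.single_pow]

lemma conv_mask_pow_one (R : Type*) [CommRing R] (v : ι → G) (n : ℕ) :
    (conv R G (mask R v) ^ n) 1 = fun _ => (Fintype.card ι : R) ^ n := by
  induction n with
  | zero => ext; simp
  | succ n ih =>
    ext q
    rw [pow_succ', Module.End.mul_apply, ih, conv_mask]
    simp [pow_succ']

lemma Tiles.prime_smul {T : Set G} {v : ι → G} (hv : Tiles T v) {p : ℕ} (hp : p.Prime)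
    (hc : p.Coprime (Fintype.card ι)) : Tiles T (fun i => p • v i) := by
  have := Fact.mk hp
  refine tiles_of_one_le hv fun q => Nat.one_le_iff_ne_zero.2 fun h0 => ?_
  have h1 : conv (ZMod p) G (mask (ZMod p) v) (T.indicator 1) = 1 := by
    ext q
    simp [conv_mask_indicator, hv q]
  have h2 := conv_mask_indicator (ZMod p) T (fun i => p • v i) q
  rw [h0, ← mask_pow, map_pow] at h2
  have h3 : (conv (ZMod p) G (mask (ZMod p) v) ^ p) (T.indicator 1)
      = (conv (ZMod p) G (mask (ZMod p) v) ^ (p - 1)) 1 := by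
    rw [← pow_sub_one_mul hp.ne_zero, Module.End.mul_apply, h1]
  rw [h3, conv_mask_pow_one, Nat.cast_zero] at h2
  have h4 := (ZMod.natCast_eq_zero_iff _ p).1 (eq_zero_of_pow_eq_zero h2)
  exact (hp.coprime_iff_not_dvd.1 hc) h4

lemma Tiles.zero {T : Set G} {v : ι → G} (hv : Tiles T v) (hc : Fintype.card ι = 1) :
    Tiles T (fun _ : ι => 0) := by
  obtain ⟨i, hi⟩ := Fintype.card_eq_one_iff.1 hc
  rw [tiles_iff] at hv ⊢
  intro q
  obtain ⟨j, hj, -⟩ := hv (q + v i)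
  obtain rfl := hi j
  exact ⟨j, by simpa using hj, fun k _ => hi k⟩

lemma Tiles.nat_smul {T : Set G} {v : ι → G} (hv : Tiles T v) (n : ℕ) :
    n.Coprime (Fintype.card ι) → Tiles T (fun i => n • v i) := by
  induction n using induction_on_primes with
  | zero =>
    intro hc
    simpa using hv.zero (by simpa using hc)
  | one => simpa using hv
  | prime_mul p n hp ih =>
    intro hc
    rw [Nat.coprime_mul_iff_left] at hc
    simpa only [mul_smul] using (ih hc.2).prime_smul hp hc.1

lemma Tiles.int_smul {T : Set G} {v : ι → G} (hv : Tiles T v) (α : ℤ)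
    (hα : IsCoprime α (Fintype.card ι : ℤ)) : Tiles T (fun i => α • v i) := by
  have h := hv.nat_smul α.natAbs (Int.isCoprime_iff_gcd_eq_one.1 hα)
  rcases Int.natAbs_eq α with h' | h' <;> rw [h']
  · simpa only [natCast_zsmul] using h
  · simpa only [neg_smul, natCast_zsmul] using h.neg

end Dilation

open Dilation in
theorem dilation_lemma
    (F T : Set (Fin 3 → ℤ)) (hF : F.Finite) (hT : IsTiling F T)
    (α : ℤ) (hα : IsCoprime α (F.ncard : ℤ)) :
    IsTiling ((fun a => α • a) '' F) T := by
  have := hF.fintype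
  have hv : Tiles T (fun a : F => (a : Fin 3 → ℤ)) := by
    rw [tiles_iff]
    intro q
    obtain ⟨⟨a, t⟩, ⟨ha, ht, hq⟩, hu⟩ := hT q
    refine ⟨⟨a, ha⟩, by simpa [hq] using ht, fun b hb => Subtype.ext ?_⟩
    exact congrArg Prod.fst (hu (b, q - b) ⟨b.2, hb, by simp⟩)
  have hw := (tiles_iff _ _).1 (hv.int_smul α (by rwa [← Nat.card_eq_fintype_card]))
  intro q
  obtain ⟨a, ha, hu⟩ := hw q
  refine ⟨(α • (a : Fin 3 → ℤ), q - α • (a : Fin 3 → ℤ)), ⟨⟨a, a.2, rfl⟩, ha, by simp⟩, ?_⟩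
  rintro ⟨_, t⟩ ⟨⟨b, hb, rfl⟩, ht, rfl⟩
  have hba := hu ⟨b, hb⟩ (by simpa using ht)
  simp [← hba]
end

section
/- Let g and h be linearly independent nonzero vectors in ℤ³. Then there exist a nonzero vector v ∈ ℤ³ orthogonal to both g and h and a positive integer n such that ker χ_g ∩ ker χ_h ⊆ ⋃_{0 ≤ i,j,k < n} ((i/n, j/n, k/n) + {tv ∈ ℝ³/ℤ³ : t ∈ ℝ}), where (i/n, j/n, k/n) and tv are taken modulo ℤ³. -/
/-!
Take `v = g × h` and `n = |v|²`. If `y ∈ ℝ³` lifts a point of the two kernels, then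
`a = ⟨g, y⟩` and `b = ⟨h, y⟩` are integers. The triple product identities
`v × y = a h - b g` and `|v|² y = ⟨v, y⟩ v - v × (v × y)` then show that `y - t v`,
with `t = ⟨v, y⟩ / n`, is an integer vector divided by `n`. Reducing that integer vector
modulo `n` changes `y - t v` only by an element of `ℤ³`.
-/

/-- The character of the torus `𝕋³ = (ℝ/ℤ)³` associated to `g ∈ ℤ³`:
`χ_g x = e^{2πi⟨g,x⟩}`. -/
noncomputable def chi (g : Fin 3 → ℤ) (x : Fin 3 → AddCircle (1 : ℝ)) : ℂ :=
  ∏ i, (AddCircle.toCircle (g i • x i) : ℂ)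

theorem chi_coe_eq_one (g : Fin 3 → ℤ) (y : Fin 3 → ℝ)
    (hy : chi g (fun i => (y i : AddCircle (1 : ℝ))) = 1) :
    ∃ a : ℤ, (g 0 : ℝ) * y 0 + g 1 * y 1 + g 2 * y 2 = a := by
  have h1 : AddCircle.toCircle
      (((g 0 : ℝ) * y 0 + g 1 * y 1 + g 2 * y 2 : ℝ) : AddCircle (1 : ℝ)) = 1 := by
    apply Subtype.ext
    simpa [chi, Fin.prod_univ_three, AddCircle.toCircle_add, ← zsmul_eq_mul] using hy
  rw [← AddCircle.toCircle_zero] at h1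
  have h2 := AddCircle.injective_toCircle one_ne_zero h1
  obtain ⟨a, ha⟩ := (AddCircle.coe_eq_zero_iff (1 : ℝ)).1 h2
  exact ⟨a, by simpa using ha.symm⟩

/-- Linear independence over `ℤ` makes the cross product, written in coordinates, nonzero. -/
theorem cross_ne_zero_of_linearIndependent (g h : Fin 3 → ℤ) (hg : g ≠ 0)
    (hind : LinearIndependent ℤ ![g, h]) :
    ![g 1 * h 2 - g 2 * h 1, g 2 * h 0 - g 0 * h 2, g 0 * h 1 - g 1 * h 0] ≠ 0 := by
  intro hv
  have e0 := congrFun hv 0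
  have e1 := congrFun hv 1
  have e2 := congrFun hv 2
  simp at e0 e1 e2
  apply hg
  rw [LinearIndependent.pair_iff] at hind
  -- The vanishing `2 × 2` minors say exactly that `h j • g = g j • h` for every `j`.
  funext j
  have := (hind (h j) (-g j) (by
    funext m
    fin_cases j <;> fin_cases m <;> simp <;> linarith)).2
  simpa using this

/-- A rational number `u / n` agrees modulo `1` with `i / n` for some `0 ≤ i < n`. -/
theorem exists_fin_coe_div_add (n : ℕ) (hn : 0 < n) (u : ℤ) (s : ℝ) :
    ∃ i : Fin n, (((u : ℝ) / n + s : ℝ) : AddCircle (1 : ℝ))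
      = ((((i : ℕ) : ℝ) / n + s : ℝ) : AddCircle (1 : ℝ)) := by
  have hn' : (0 : ℤ) < n := by exact_mod_cast hn
  have hlt := Int.emod_lt_of_pos u hn'
  have hnn := Int.emod_nonneg u hn'.ne'
  refine ⟨⟨(u % n).toNat, by omega⟩, ?_⟩
  have hc : (((u % n).toNat : ℕ) : ℝ) = ((u % n : ℤ) : ℝ) := by
    exact_mod_cast congrArg (Int.cast : ℤ → ℝ) (Int.toNat_of_nonneg hnn)
  have hd : (u : ℝ) = ((u % n : ℤ) : ℝ) + n * ((u / n : ℤ) : ℝ) := by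
    exact_mod_cast (Int.emod_add_mul_ediv u n).symm
  have hnr : (n : ℝ) ≠ 0 := by exact_mod_cast hn.ne'
  rw [← sub_eq_zero, ← AddCircle.coe_sub, AddCircle.coe_eq_zero_iff]
  refine ⟨u / n, ?_⟩
  simp only [hc]
  rw [hd]
  field_simp
  simp [mul_comm]

theorem ker_inter_ker_subset_finite_union_of_rational_lines
    (g h : Fin 3 → ℤ) (hg : g ≠ 0) (hh : h ≠ 0)
    (hind : LinearIndependent ℤ ![g, h]) :
    ∃ (v : Fin 3 → ℤ) (n : ℕ), v ≠ 0 ∧ 0 < n ∧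
      (∑ m, v m * g m = 0) ∧ (∑ m, v m * h m = 0) ∧
      ∀ x : Fin 3 → AddCircle (1 : ℝ), chi g x = 1 → chi h x = 1 →
        ∃ i j k : Fin n, ∃ t : ℝ,
          x = fun m =>
            (((![(i : ℕ), (j : ℕ), (k : ℕ)] m : ℝ) / n + t * v m : ℝ) : AddCircle (1 : ℝ)) := by
  have hv := cross_ne_zero_of_linearIndependent g h hg hind
  obtain ⟨v, hvdef⟩ : ∃ v : Fin 3 → ℤ,
    v = ![g 1 * h 2 - g 2 * h 1, g 2 * h 0 - g 0 * h 2, g 0 * h 1 - g 1 * h 0] := ⟨_, rfl⟩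
  rw [← hvdef] at hv
  have v0 : v 0 = g 1 * h 2 - g 2 * h 1 := by simp [hvdef]
  have v1 : v 1 = g 2 * h 0 - g 0 * h 2 := by simp [hvdef]
  have v2 : v 2 = g 0 * h 1 - g 1 * h 0 := by simp [hvdef]
  have hpos : 0 < v 0 ^ 2 + v 1 ^ 2 + v 2 ^ 2 := by
    by_contra hle
    apply hv
    funext m
    have s0 := sq_nonneg (v 0)
    have s1 := sq_nonneg (v 1)
    have s2 := sq_nonneg (v 2)
    fin_cases m <;> exact pow_eq_zero_iff two_ne_zero |>.1 (by dsimp; linarith)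
  obtain ⟨n, hn⟩ := Int.eq_ofNat_of_zero_le hpos.le
  have hn0 : 0 < n := by omega
  refine ⟨v, n, hv, hn0, ?_, ?_, ?_⟩
  · simp only [Fin.sum_univ_three, v0, v1, v2]; ring
  · simp only [Fin.sum_univ_three, v0, v1, v2]; ring
  intro x hgx hhx
  choose y hy using fun m => QuotientAddGroup.mk_surjective (x m)
  obtain rfl : (fun m => (y m : AddCircle (1 : ℝ))) = x := funext hy
  obtain ⟨a, ha⟩ := chi_coe_eq_one g y hgx
  obtain ⟨b, hb⟩ := chi_coe_eq_one h y hhx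
  have hnR : (n : ℝ) = (v 0 : ℝ) ^ 2 + v 1 ^ 2 + v 2 ^ 2 := by exact_mod_cast hn.symm
  have hnr : (n : ℝ) ≠ 0 := by exact_mod_cast hn0.ne'
  have r0 : (v 0 : ℝ) = g 1 * h 2 - g 2 * h 1 := by exact_mod_cast v0
  have r1 : (v 1 : ℝ) = g 2 * h 0 - g 0 * h 2 := by exact_mod_cast v1
  have r2 : (v 2 : ℝ) = g 0 * h 1 - g 1 * h 0 := by exact_mod_cast v2
  -- `v × y = a h - b g`, coordinate by coordinate.
  have w0 : (v 1 : ℝ) * y 2 - v 2 * y 1 = a * h 0 - b * g 0 := by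
    rw [← ha, ← hb, r1, r2]; ring
  have w1 : (v 2 : ℝ) * y 0 - v 0 * y 2 = a * h 1 - b * g 1 := by
    rw [← ha, ← hb, r0, r2]; ring
  have w2 : (v 0 : ℝ) * y 1 - v 1 * y 0 = a * h 2 - b * g 2 := by
    rw [← ha, ← hb, r0, r1]; ring
  obtain ⟨t, ht⟩ : ∃ t : ℝ, t = (v 0 * y 0 + v 1 * y 1 + v 2 * y 2) / n := ⟨_, rfl⟩
  -- The numerators are the coordinates of `-v × (a h - b g)`.
  have y0 : y 0 = ((v 2 * (a * h 1 - b * g 1) - v 1 * (a * h 2 - b * g 2) : ℤ) : ℝ) / n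
      + t * v 0 := by
    push_cast
    rw [← w1, ← w2, ht]; field_simp; rw [hnR]; ring
  have y1 : y 1 = ((v 0 * (a * h 2 - b * g 2) - v 2 * (a * h 0 - b * g 0) : ℤ) : ℝ) / n
      + t * v 1 := by
    push_cast
    rw [← w0, ← w2, ht]; field_simp; rw [hnR]; ring
  have y2 : y 2 = ((v 1 * (a * h 0 - b * g 0) - v 0 * (a * h 1 - b * g 1) : ℤ) : ℝ) / n
      + t * v 2 := by
    push_cast
    rw [← w0, ← w1, ht]; field_simp; rw [hnR]; ring
  obtain ⟨i, hi⟩ := exists_fin_coe_div_add n hn0 _ (t * v 0)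
  obtain ⟨j, hj⟩ := exists_fin_coe_div_add n hn0 _ (t * v 1)
  obtain ⟨k, hk⟩ := exists_fin_coe_div_add n hn0 _ (t * v 2)
  refine ⟨i, j, k, t, ?_⟩
  funext m
  fin_cases m
  · exact (congrArg _ y0).trans hi
  · exact (congrArg _ y1).trans hj
  · exact (congrArg _ y2).trans hk
end

section
/- Let p be a prime and k a positive integer, and let ζ be a primitive p^k-th root of unity. If there exist integers a₁, …, a_m with ζ^{a₁} + ⋯ + ζ^{a_m} = 0, then p divides m. -/
/-!
Choose natural exponents `b i` with `ζ ^ b i = ζ ^ a i`. The integer polynomial `∑ i, X ^ b i` then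
vanishes at `ζ`, so it is divisible over `ℤ` by the minimal polynomial of `ζ`, the cyclotomic
polynomial `Φ_{p ^ k}`. Evaluating at `1`, where `Φ_{p ^ k}` takes the value `p` and the sum takes
the value `m`, gives `p ∣ m`.
-/

theorem prime_dvd_card_of_primitive_root_sum_eq_zero
    (p : ℕ) (hp : p.Prime) (k : ℕ) (hk : 0 < k)
    (ζ : ℂ) (hζ : IsPrimitiveRoot ζ (p ^ k))
    (m : ℕ) (a : Fin m → ℤ) (hsum : ∑ i, ζ ^ (a i) = 0) :
    p ∣ m := by
  haveI : Fact p.Prime := ⟨hp⟩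
  have hpos : 0 < p ^ k := pow_pos hp.pos k
  haveI : NeZero (p ^ k) := ⟨hpos.ne'⟩
  have hb : ∀ i, ∃ b : ℕ, ζ ^ b = ζ ^ (a i) := fun i => by
    have h1 : (ζ ^ (a i)) ^ (p ^ k) = 1 := by
      rw [← zpow_natCast, ← zpow_mul, mul_comm, zpow_mul, zpow_natCast, hζ.pow_eq_one, one_zpow]
    obtain ⟨b, -, hb⟩ := hζ.eq_pow_of_pow_eq_one h1
    exact ⟨b, hb⟩
  choose b hb using hb
  have hdvd : Polynomial.cyclotomic (p ^ k) ℤ ∣ ∑ i, (Polynomial.X : Polynomial ℤ) ^ b i := by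
    rw [Polynomial.cyclotomic_eq_minpoly hζ hpos]
    apply minpoly.isIntegrallyClosed_dvd (hζ.isIntegral hpos)
    simp [hb, hsum]
  have h := Polynomial.eval_dvd (x := 1) hdvd
  obtain ⟨n, rfl⟩ := Nat.exists_eq_add_one.mpr hk
  rw [Polynomial.eval_one_cyclotomic_prime_pow] at h
  simp only [Polynomial.eval_finsetSum, Polynomial.eval_pow, Polynomial.eval_X, one_pow,
    Finset.sum_const, Finset.card_univ, Fintype.card_fin, nsmul_eq_mul, mul_one] at h
  exact_mod_cast h
end

section
/- Let F ⊆ ℤ³ be a finite set containing the origin. Then there is a finite subset Δ of ℤ³ \ {0} whose elements are pairwise linearly independent such that Z := ⋂_{α coprime to |F|} Z(Σ_{g∈F} χ_{αg}) is contained in ⋃_{h∈Δ} ker χ_h. -/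
lemma chi_zero (x : Fin 3 → AddCircle (1 : ℝ)) : chi 0 x = 1 := by
  simp [chi]

lemma chi_nsmul (n : ℕ) (g : Fin 3 → ℤ) (x : Fin 3 → AddCircle (1 : ℝ)) :
    chi ((n : ℤ) • g) x = chi g x ^ n := by
  unfold chi
  rw [← Finset.prod_pow]
  refine Finset.prod_congr rfl fun i _ => ?_
  rw [Pi.smul_apply, smul_assoc, natCast_zsmul, AddCircle.toCircle_nsmul, Circle.coe_pow]

lemma chi_zsmul_eq_one (n : ℤ) {g : Fin 3 → ℤ} {x : Fin 3 → AddCircle (1 : ℝ)}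
    (h : chi g x = 1) : chi (n • g) x = 1 := by
  have key : chi (n • g) x = chi g x ^ n := by
    unfold chi
    rw [← Finset.prod_zpow]
    refine Finset.prod_congr rfl fun i _ => ?_
    rw [Pi.smul_apply, smul_assoc, AddCircle.toCircle_zsmul, Circle.coe_zpow]
  rw [key, h, one_zpow]

/-- If the twisted sums vanish along the progression `1 + kN`, then a nonzero index has
character value an `N`-th root of unity. -/
lemma exists_pow_eq_one (S : Finset (Fin 3 → ℤ)) (h0 : 0 ∈ S) (N : ℕ)
    (x : Fin 3 → AddCircle (1 : ℝ))
    (h : ∀ k : ℕ, ∑ g ∈ S, chi g x * (chi g x ^ N) ^ k = 0) :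
    ∃ g ∈ S.erase 0, chi g x ^ N = 1 := by
  have hpoly : ∀ P : Polynomial ℂ, ∑ g ∈ S, chi g x * P.eval (chi g x ^ N) = 0 := by
    intro P
    induction P using Polynomial.induction_on' with
    | add p q hp hq => simp only [Polynomial.eval_add, mul_add, Finset.sum_add_distrib, hp, hq,
        add_zero]
    | monomial k a =>
      simp only [Polynomial.eval_monomial, mul_left_comm _ a]
      rw [← Finset.mul_sum, h, mul_zero]
  have hP := hpoly (∏ g ∈ S.erase 0, (Polynomial.X - Polynomial.C (chi g x ^ N)))
  simp only [Polynomial.eval_prod, Polynomial.eval_sub, Polynomial.eval_X,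
    Polynomial.eval_C] at hP
  rw [← Finset.add_sum_erase S _ h0, Finset.sum_eq_zero, chi_zero, one_pow, one_mul, add_zero,
    Finset.prod_eq_zero_iff] at hP
  · obtain ⟨g, hg, hg1⟩ := hP
    exact ⟨g, hg, (sub_eq_zero.mp hg1).symm⟩
  · intro g hg
    exact mul_eq_zero_of_right _ (Finset.prod_eq_zero hg (sub_self (chi g x ^ N)))

/-- Every finite set of nonzero vectors has multiples in a finite pairwise linearly independent
set: a vector dependent on a member already chosen is absorbed by replacing that member with a
common multiple. -/
lemma exists_pairwise_independent_multiples (S : Finset (Fin 3 → ℤ)) (hS : ∀ h ∈ S, h ≠ 0) :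
    ∃ Δ : Finset (Fin 3 → ℤ),
      (∀ h ∈ Δ, h ≠ 0) ∧
      (∀ h₁ ∈ Δ, ∀ h₂ ∈ Δ, h₁ ≠ h₂ → LinearIndependent ℤ ![h₁, h₂]) ∧
      ∀ s ∈ S, ∃ n : ℤ, n • s ∈ Δ := by
  classical
  induction S using Finset.induction_on with
  | empty => exact ⟨∅, by simp, by simp, by simp⟩
  | insert h S _ ih =>
    obtain ⟨Δ, hne, hind, hmul⟩ := ih fun s hs => hS s (Finset.mem_insert_of_mem hs)
    have hh : h ≠ 0 := hS h (Finset.mem_insert_self _ _)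
    by_cases hdep : ∃ d ∈ Δ, ¬ LinearIndependent ℤ ![d, h]
    · obtain ⟨d, hd, hdh⟩ := hdep
      have hd0 := hne d hd
      obtain ⟨a, b, ha, hab⟩ : ∃ a b : ℤ, a ≠ 0 ∧ a • d = b • h := by
        rw [LinearIndependent.pair_iff] at hdh
        push Not at hdh
        obtain ⟨a, b, hab, hne'⟩ := hdh
        refine ⟨a, -b, ?_, by rw [neg_smul]; exact eq_neg_of_add_eq_zero_left hab⟩
        rintro rfl
        rw [zero_smul, zero_add, smul_eq_zero] at hab
        exact hab.elim (hne' rfl) hh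
      have hindep : ∀ e ∈ Δ, e ≠ d → LinearIndependent ℤ ![a • d, e] := by
        intro e he hed
        have := LinearIndependent.pair_iff.mp (hind d hd e he hed.symm)
        rw [LinearIndependent.pair_iff]
        intro s t hst
        rw [smul_smul] at hst
        obtain ⟨h1, h2⟩ := this _ _ hst
        exact ⟨(mul_eq_zero.mp h1).resolve_right ha, h2⟩
      refine ⟨insert (a • d) (Δ.erase d), ?_, ?_, ?_⟩
      · intro e he
        rcases Finset.mem_insert.mp he with rfl | he
        · exact smul_ne_zero ha hd0
        · exact hne e (Finset.mem_of_mem_erase he)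
      · intro e₁ h₁ e₂ h₂ h₁₂
        rcases Finset.mem_insert.mp h₁ with rfl | k₁ <;>
          rcases Finset.mem_insert.mp h₂ with rfl | k₂
        · exact absurd rfl h₁₂
        · exact hindep e₂ (Finset.mem_of_mem_erase k₂) (Finset.ne_of_mem_erase k₂)
        · rw [LinearIndependent.pair_symm_iff]
          exact hindep e₁ (Finset.mem_of_mem_erase k₁) (Finset.ne_of_mem_erase k₁)
        · exact hind _ (Finset.mem_of_mem_erase k₁) _ (Finset.mem_of_mem_erase k₂) h₁₂
      · intro s hs
        rcases Finset.mem_insert.mp hs with rfl | hs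
        · exact ⟨b, by rw [← hab]; exact Finset.mem_insert_self _ _⟩
        · obtain ⟨n, hn⟩ := hmul s hs
          by_cases hnd : n • s = d
          · exact ⟨a * n, by rw [← smul_smul, hnd]; exact Finset.mem_insert_self _ _⟩
          · exact ⟨n, Finset.mem_insert_of_mem (Finset.mem_erase.mpr ⟨hnd, hn⟩)⟩
    · push Not at hdep
      refine ⟨insert h Δ, ?_, ?_, ?_⟩
      · intro e he
        rcases Finset.mem_insert.mp he with rfl | he
        exacts [hh, hne e he]
      · intro e₁ h₁ e₂ h₂ h₁₂
        rcases Finset.mem_insert.mp h₁ with rfl | k₁ <;>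
          rcases Finset.mem_insert.mp h₂ with rfl | k₂
        · exact absurd rfl h₁₂
        · rw [LinearIndependent.pair_symm_iff]
          exact hdep e₂ k₂
        · exact hdep e₁ k₁
        · exact hind _ k₁ _ k₂ h₁₂
      · intro s hs
        rcases Finset.mem_insert.mp hs with rfl | hs
        · exact ⟨1, by rw [one_smul]; exact Finset.mem_insert_self _ _⟩
        · obtain ⟨n, hn⟩ := hmul s hs
          exact ⟨n, Finset.mem_insert_of_mem hn⟩

theorem spectral_support_in_finite_union_of_kernels
    (F : Set (Fin 3 → ℤ)) (hF : F.Finite) (h0 : (0 : Fin 3 → ℤ) ∈ F) :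
    ∃ Δ : Finset (Fin 3 → ℤ),
      (∀ h ∈ Δ, h ≠ 0) ∧
      (∀ h₁ ∈ Δ, ∀ h₂ ∈ Δ, h₁ ≠ h₂ → LinearIndependent ℤ ![h₁, h₂]) ∧
      ∀ x : Fin 3 → AddCircle (1 : ℝ),
        (∀ α : ℕ, Nat.Coprime α F.ncard → ∑ g ∈ hF.toFinset, chi ((α : ℤ) • g) x = 0) →
        ∃ h ∈ Δ, chi h x = 1 := by
  classical
  have hN : (F.ncard : ℤ) ≠ 0 := by
    exact_mod_cast (Set.ncard_pos hF).mpr ⟨0, h0⟩ |>.ne'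
  obtain ⟨Δ, hne, hind, hmul⟩ := exists_pairwise_independent_multiples
    ((hF.toFinset.erase 0).image fun g => (F.ncard : ℤ) • g) (by
      intro h hh
      obtain ⟨g, hg, rfl⟩ := Finset.mem_image.mp hh
      exact smul_ne_zero hN (Finset.ne_of_mem_erase hg))
  refine ⟨Δ, hne, hind, fun x hx => ?_⟩
  obtain ⟨g, hg, hg1⟩ := exists_pow_eq_one hF.toFinset (hF.mem_toFinset.mpr h0) F.ncard x (by
    intro k
    rw [← hx (1 + F.ncard * k) (by simp)]
    refine Finset.sum_congr rfl fun g _ => ?_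
    rw [chi_nsmul, pow_add, pow_one, pow_mul])
  obtain ⟨n, hn⟩ := hmul _ (Finset.mem_image_of_mem _ hg)
  exact ⟨_, hn, chi_zsmul_eq_one n (by rw [chi_nsmul, hg1])⟩
end

section
/- Let F ⊆ ℤ³ be a cluster containing the origin, p a prime with |F| a power of p, and h an arbitrary nonzero vector in ℤ³. Then at least one of the following holds: (1) every line in ℝ³ parallel to h intersects F in a set of size divisible by p; or (2) there is a finite set Γ ⊆ ℤ³ \ {0} such that every element of Γ is linearly independent from h and ker χ_h ∩ (⋂_{α coprime to |F|} Z(Σ_{g∈F} χ_{αg})) ⊆ ⋃_{v∈Γ} (ker χ_h ∩ ker χ_v). -/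
/-!
Suppose some line `ℓ` parallel to `h` meets `F` in a number of points not divisible by `p`, and
fix `g₀ ∈ F ∩ ℓ`. Choose a coordinate with `h i ≠ 0` and put `N = p * h i` and
`D = |N| = p ^ r * d` with `p ∤ d`; the extra factor `p` ensures `1 ≤ r`.
If `g ∈ ℓ`, then `N • (g - g₀)` is an integer multiple of `h`, so `χ_g(x) ^ D = χ_{g₀}(x) ^ D` for
every `x ∈ ker χ_h`. The set `Γ` consists of the vectors `N • (g - g₀)` with `g ∈ F \ ℓ`; these
are independent from `h`.

Let `x` be a common zero in `ker χ_h` lying in no `ker χ_v`, `v ∈ Γ`. The exponents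
`α = d * (1 + p ^ r * j)` are coprime to `p`, so with `u_g = χ_g(x) ^ d` and `w_g = χ_g(x) ^ D`
one has `∑ u_g * w_g ^ j = 0` for all `j`, hence `∑ u_g * P(w_g) = 0` for every polynomial `P`.
Here `w_g = w_{g₀}` exactly for `g ∈ F ∩ ℓ`, so a `P` vanishing at the other `w_g` isolates
`∑_{g ∈ F ∩ ℓ} u_g = 0` (`sum_eq_zero_of_moments`). Dividing by `u_{g₀}` gives a vanishing sum of
`|F ∩ ℓ|` roots of unity of order a power of `p`, which forces `p ∣ |F ∩ ℓ|`
(`prime_dvd_card_of_sum_eq_zero`).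
-/

/-- The canonical embedding of `ℤ³` into `ℝ³`. -/
def coe3 (x : Fin 3 → ℤ) : Fin 3 → ℝ := fun i => (x i : ℝ)

/-- A vanishing sum of `n` roots of unity of `p`-power order has `p ∣ n`: written as a polynomial
in a primitive root, the sum is divisible by a cyclotomic polynomial, whose value at `1` is `p`. -/
lemma prime_dvd_card_of_sum_eq_zero {ι : Type*} (s : Finset ι) (p r : ℕ) (hp : p.Prime)
    (η : ι → ℂ) (hη : ∀ i ∈ s, η i ^ p ^ r = 1) (hs : ∑ i ∈ s, η i = 0) : p ∣ s.card := by
  have : Fact p.Prime := ⟨hp⟩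
  -- The exponent is raised to `r + 1` so that the value at `1` is `p` even when `r = 0`.
  have hpos : 0 < p ^ (r + 1) := pow_pos hp.pos _
  have : NeZero (p ^ (r + 1)) := ⟨hpos.ne'⟩
  have hζ := Complex.isPrimitiveRoot_exp (p ^ (r + 1)) hpos.ne'
  set ζ := Complex.exp (2 * Real.pi * Complex.I / ((p ^ (r + 1) : ℕ) : ℂ))
  have hk : ∀ i, ∃ k : ℕ, i ∈ s → ζ ^ k = η i := by
    intro i
    by_cases hi : i ∈ s
    · have h1 : η i ^ p ^ (r + 1) = 1 := by rw [pow_succ, pow_mul, hη i hi, one_pow]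
      obtain ⟨k, -, hk⟩ := hζ.eq_pow_of_pow_eq_one h1
      exact ⟨k, fun _ => hk⟩
    · exact ⟨0, fun h => absurd h hi⟩
  choose k hk using hk
  let P : Polynomial ℤ := ∑ i ∈ s, Polynomial.X ^ k i
  have hP : Polynomial.aeval ζ P = 0 := by
    simp only [P, map_sum, map_pow, Polynomial.aeval_X]
    rw [← hs]
    exact Finset.sum_congr rfl fun i hi => hk i hi
  have hdvd : Polynomial.cyclotomic (p ^ (r + 1)) ℤ ∣ P := by
    rw [Polynomial.cyclotomic_eq_minpoly hζ hpos]
    exact minpoly.isIntegrallyClosed_dvd (hζ.isIntegral hpos) hP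
  have h1 := Polynomial.eval_dvd (x := (1 : ℤ)) hdvd
  rw [Polynomial.eval_one_cyclotomic_prime_pow] at h1
  simp only [P, Polynomial.eval_finsetSum, Polynomial.eval_pow, Polynomial.eval_X, one_pow,
    Finset.sum_const, nsmul_eq_mul, mul_one] at h1
  exact_mod_cast h1

/-- If all moments `∑ u i * w i ^ j` vanish, then so does the part of `∑ u i` supported on a
level set of `w`. -/
lemma sum_eq_zero_of_moments {ι : Type*} (s : Finset ι) (q : ι → Prop) [DecidablePred q]
    (u w : ι → ℂ) (c : ℂ) (hu : ∀ j : ℕ, ∑ i ∈ s, u i * w i ^ j = 0)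
    (hq : ∀ i ∈ s, q i → w i = c) (hnq : ∀ i ∈ s, ¬ q i → w i ≠ c) :
    ∑ i ∈ s with q i, u i = 0 := by
  have hP : ∀ P : Polynomial ℂ, ∑ i ∈ s, u i * P.eval (w i) = 0 := by
    intro P
    induction P using Polynomial.induction_on' with
    | add P Q h1 h2 => simp [mul_add, Finset.sum_add_distrib, h1, h2]
    | monomial n a =>
      simp only [Polynomial.eval_monomial]
      rw [← mul_zero a, ← hu n, Finset.mul_sum]
      exact Finset.sum_congr rfl fun i _ => by ring
  let P : Polynomial ℂ := ∏ i ∈ s with ¬ q i, (Polynomial.X - Polynomial.C (w i))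
  have hc : P.eval c ≠ 0 := by
    simp only [P, Polynomial.eval_prod, Polynomial.eval_sub, Polynomial.eval_X, Polynomial.eval_C]
    refine Finset.prod_ne_zero_iff.2 fun i hi => ?_
    rw [Finset.mem_filter] at hi
    exact sub_ne_zero.2 (hnq i hi.1 hi.2).symm
  have h := hP P
  rw [← Finset.sum_filter_add_sum_filter_not s q] at h
  have h2 : ∑ i ∈ s with ¬ q i, u i * P.eval (w i) = 0 := by
    refine Finset.sum_eq_zero fun i hi => ?_
    have : P.eval (w i) = 0 := by
      simp only [P, Polynomial.eval_prod]
      exact Finset.prod_eq_zero hi (by simp)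
    rw [this, mul_zero]
  have h3 : ∑ i ∈ s with q i, u i * P.eval (w i) = (∑ i ∈ s with q i, u i) * P.eval c := by
    rw [Finset.sum_mul]
    refine Finset.sum_congr rfl fun i hi => ?_
    rw [Finset.mem_filter] at hi
    rw [hq i hi.1 hi.2]
  rw [h2, h3, add_zero] at h
  exact (mul_eq_zero.1 h).resolve_right hc

lemma chi_ne_zero (g : Fin 3 → ℤ) (x : Fin 3 → AddCircle (1 : ℝ)) : chi g x ≠ 0 :=
  Finset.prod_ne_zero_iff.2 fun _ _ => Circle.coe_ne_zero _

lemma chi_sub (g g' : Fin 3 → ℤ) (x : Fin 3 → AddCircle (1 : ℝ)) :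
    chi (g - g') x = chi g x / chi g' x := by
  simp only [chi, Pi.sub_apply, sub_eq_add_neg, add_smul, neg_smul, AddCircle.toCircle_add,
    AddCircle.toCircle_neg, Circle.coe_mul, Circle.coe_inv, Finset.prod_mul_distrib,
    Finset.prod_inv_distrib, div_eq_mul_inv]

lemma chi_zsmul (n : ℤ) (g : Fin 3 → ℤ) (x : Fin 3 → AddCircle (1 : ℝ)) :
    chi (n • g) x = chi g x ^ n := by
  simp only [chi, Pi.smul_apply, smul_assoc, AddCircle.toCircle_zsmul, Circle.coe_zpow,
    Finset.prod_zpow]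

theorem lines_divisible_or_spectral_support_in_kernel_pairs
    (F : Set (Fin 3 → ℤ)) (hF : F.Finite) (h0 : (0 : Fin 3 → ℤ) ∈ F)
    (p : ℕ) (hp : p.Prime) (hpow : ∃ m : ℕ, F.ncard = p ^ m)
    (h : Fin 3 → ℤ) (hh : h ≠ 0) :
    (∀ ℓ : AffineSubspace ℝ (Fin 3 → ℝ),
      Module.finrank ℝ ℓ.direction = 1 → coe3 h ∈ ℓ.direction →
        p ∣ {x ∈ F | coe3 x ∈ ℓ}.ncard) ∨
    (∃ Γ : Finset (Fin 3 → ℤ),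
      (∀ v ∈ Γ, v ≠ 0) ∧
      (∀ v ∈ Γ, LinearIndependent ℤ ![v, h]) ∧
      ∀ x : Fin 3 → AddCircle (1 : ℝ), chi h x = 1 →
        (∀ α : ℕ, Nat.Coprime α F.ncard → ∑ g ∈ hF.toFinset, chi ((α : ℤ) • g) x = 0) →
        ∃ v ∈ Γ, chi h x = 1 ∧ chi v x = 1) := by
  classical
  by_cases hall : ∀ ℓ : AffineSubspace ℝ (Fin 3 → ℝ),
      Module.finrank ℝ ℓ.direction = 1 → coe3 h ∈ ℓ.direction →
        p ∣ {x ∈ F | coe3 x ∈ ℓ}.ncard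
  · exact Or.inl hall
  right
  push Not at hall
  obtain ⟨ℓ, hdim, hdir, hnd⟩ := hall
  have hne : {x ∈ F | coe3 x ∈ ℓ}.Nonempty := by
    rw [Set.nonempty_iff_ne_empty]
    intro he
    simp [he] at hnd
  obtain ⟨g₀, hg₀F, hg₀⟩ := hne
  obtain ⟨i, hi⟩ : ∃ i, h i ≠ 0 := Function.ne_iff.1 hh
  have hh' : coe3 h ≠ 0 := fun e => hi (by simpa [coe3] using congrFun e i)
  -- The factor `p` makes the exponents `d * (1 + p ^ r * j)` used below coprime to `p`.
  obtain ⟨N, hN⟩ : ∃ N : ℤ, N = p * h i := ⟨_, rfl⟩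
  have hN0 : N ≠ 0 := hN ▸ mul_ne_zero (by exact_mod_cast hp.ne_zero) hi
  have hon : ∀ g, coe3 g ∈ ℓ → N • (g - g₀) = (p * (g i - g₀ i)) • h := by
    intro g hg
    have hmem : coe3 g - coe3 g₀ ∈ ℓ.direction := AffineSubspace.vsub_mem_direction hg hg₀
    obtain ⟨c, hc⟩ := (finrank_eq_one_iff_of_nonzero' (⟨coe3 h, hdir⟩ : ℓ.direction)
      (fun e => hh' (congrArg Subtype.val e))).1 hdim ⟨_, hmem⟩
    have hc' : ∀ k, c * (h k : ℝ) = g k - g₀ k := fun k => by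
      simpa [coe3] using congrFun (congrArg Subtype.val hc) k
    ext k
    have : (h i : ℝ) * (g k - g₀ k) = (g i - g₀ i) * h k := by
      rw [← hc', ← hc']; ring
    have hZ : h i * (g k - g₀ k) = (g i - g₀ i) * h k := by exact_mod_cast this
    simp only [Pi.smul_apply, Pi.sub_apply, smul_eq_mul, hN]
    linear_combination (p : ℤ) * hZ
  have hoff : ∀ g, coe3 g ∉ ℓ → LinearIndependent ℤ ![N • (g - g₀), h] := by
    intro g hg
    rw [LinearIndependent.pair_iff]
    intro s t hst
    have hs : s = 0 := by
      by_contra hs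
      apply hg
      have hsi : (s : ℝ) * N ≠ 0 := mul_ne_zero (by exact_mod_cast hs) (by exact_mod_cast hN0)
      have he : coe3 g = (-(t : ℝ) / (s * N)) • coe3 h +ᵥ coe3 g₀ := by
        ext k
        have h1 : (s : ℝ) * (N * (g k - g₀ k)) + t * h k = 0 := by
          have := congrFun hst k
          simp only [Pi.add_apply, Pi.smul_apply, Pi.sub_apply, smul_eq_mul, Pi.zero_apply] at this
          exact_mod_cast this
        simp only [coe3, vadd_eq_add, Pi.add_apply, Pi.smul_apply, smul_eq_mul]
        field_simp
        linarith
      rw [he]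
      exact AffineSubspace.vadd_mem_of_mem_direction (ℓ.direction.smul_mem _ hdir) hg₀
    subst hs
    refine ⟨rfl, ?_⟩
    have := congrFun hst i
    simpa [hi] using this
  refine ⟨(hF.toFinset.filter fun g => coe3 g ∉ ℓ).image fun g => N • (g - g₀), ?_, ?_, ?_⟩
  · intro v hv
    obtain ⟨g, hg, rfl⟩ := Finset.mem_image.1 hv
    exact (hoff g (Finset.mem_filter.1 hg).2).ne_zero 0
  · intro v hv
    obtain ⟨g, hg, rfl⟩ := Finset.mem_image.1 hv
    exact hoff g (Finset.mem_filter.1 hg).2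
  intro x hx hsum
  by_contra hcon
  push Not at hcon
  obtain ⟨r, d, hd, hD⟩ := Nat.exists_eq_pow_mul_and_not_dvd (Int.natAbs_ne_zero.2 hN0) p hp.ne_one
  have hr : r ≠ 0 := by
    rintro rfl
    rw [hN, Int.natAbs_mul, Int.natAbs_natCast, pow_zero, one_mul] at hD
    exact hd (hD ▸ dvd_mul_right _ _)
  have hiff : ∀ g, chi g x ^ N.natAbs = chi g₀ x ^ N.natAbs ↔
      chi (N • (g - g₀)) x = 1 := by
    intro g
    rw [chi_zsmul, chi_sub, ← div_eq_one_iff_eq (pow_ne_zero _ (chi_ne_zero _ _)), ← div_pow]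
    rcases Int.natAbs_eq N with e | e <;>
      generalize N.natAbs = n at e ⊢ <;> rw [e] <;> simp
  have hw : ∀ g ∈ hF.toFinset, coe3 g ∈ ℓ →
      chi g x ^ N.natAbs = chi g₀ x ^ N.natAbs := by
    intro g _ hg
    rw [hiff, hon g hg, chi_zsmul, hx, one_zpow]
  have key := sum_eq_zero_of_moments hF.toFinset (fun g => coe3 g ∈ ℓ)
    (fun g => chi g x ^ d) (fun g => chi g x ^ N.natAbs) (chi g₀ x ^ N.natAbs)
    (by
      intro j
      obtain ⟨m, hm⟩ := hpow
      have hcop : Nat.Coprime (d + N.natAbs * j) F.ncard := by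
        rw [hm]
        refine Nat.Coprime.pow_right m ((Nat.Prime.coprime_iff_not_dvd hp).2 fun hdvd => hd ?_).symm
        refine (Nat.dvd_add_left ?_).1 hdvd
        rw [hD, mul_assoc]
        exact (dvd_pow_self p hr).mul_right _
      rw [← hsum _ hcop]
      refine Finset.sum_congr rfl fun g _ => ?_
      rw [chi_zsmul, zpow_natCast, pow_add, pow_mul])
    hw
    (by
      intro g hg hgl
      rw [Ne, hiff]
      exact hcon _ (Finset.mem_image_of_mem _ (Finset.mem_filter.2 ⟨hg, hgl⟩)) hx)
  apply hnd
  have hcard : {x ∈ F | coe3 x ∈ ℓ}.ncard = (hF.toFinset.filter fun g => coe3 g ∈ ℓ).card := by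
    rw [← Set.ncard_coe_finset]
    congr 1
    ext g
    simp
  rw [hcard]
  refine prime_dvd_card_of_sum_eq_zero _ p r hp (fun g => (chi g x / chi g₀ x) ^ d) ?_ ?_
  · intro g hg
    rw [Finset.mem_filter] at hg
    rw [← pow_mul, mul_comm d, ← hD, div_pow, hw g hg.1 hg.2,
      div_self (pow_ne_zero _ (chi_ne_zero _ _))]
  · simp only [div_pow]
    rw [← Finset.sum_div, key, zero_div]
end

section
/- Let (Y, 𝒴, ν) be a probability space equipped with a measure-preserving ergodic ℤ³-action and φ : Y → ℝ/ℤ a measurable function. For y ∈ Y let φ_y : ℤ³ → ℝ/ℤ be the 3-dimensional sequence φ_y(v) = φ(v·y). Suppose that for ν-almost every y ∈ Y, the sequence φ_y is either constant or equidistributed. Then the pushforward measure φ_*ν is either a Dirac measure or the Haar measure on ℝ/ℤ. -/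
/-!
The set `A` of points whose orbit sequence `v ↦ φ (T v y)` is constant is measurable (a countable
intersection) and strictly invariant, so by ergodicity it is null or conull.

If `A` is conull, then `A ∩ φ⁻¹ U` is strictly invariant for every measurable `U`, hence null or
conull, and `φ` is a.e. constant because the circle has a countable separating family of measurable
sets (`exists_ae_eq_const_of_orbit_const`).

If `A` is null, almost every orbit sequence is equidistributed. By invariance of `ν`, the average
over `[-n, n]³` of `f (φ (T p y))` has integral `∫ f ∘ φ dν` for every `n`, while by dominated
convergence these integrals tend to the Haar integral of `f` (`map_eq_volume_of_equidistributed`).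
No pointwise ergodic theorem is needed.
-/

open MeasureTheory

/-- A 3-dimensional sequence `t : ℤ³ → ℝ/ℤ` is equidistributed if the uniform probability
measures on `{t_p : p ∈ [-n, n]³}` converge weak* to the Haar probability measure on `ℝ/ℤ`,
i.e. the averages of every continuous function converge to its integral. -/
def Equidistributed3 (t : (Fin 3 → ℤ) → AddCircle (1 : ℝ)) : Prop :=
  ∀ f : C(AddCircle (1 : ℝ), ℝ),
    Filter.Tendsto
      (fun n : ℕ =>
        (∑ p ∈ Fintype.piFinset fun _ : Fin 3 => Finset.Icc (-(n : ℤ)) (n : ℤ), f (t p)) /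
          ((2 * n + 1 : ℝ)) ^ 3)
      Filter.atTop (nhds (∫ x, f x))

/-- An almost surely orbit-wise constant function is almost surely constant under an ergodic
action. -/
lemma exists_ae_eq_const_of_orbit_const
    {Y : Type*} [MeasurableSpace Y] (ν : Measure Y) [IsProbabilityMeasure ν]
    (T : (Fin 3 → ℤ) → Y → Y)
    (herg : ∀ A : Set Y, MeasurableSet A → (∀ g : Fin 3 → ℤ, T g ⁻¹' A = A) →
      ν A = 0 ∨ ν A = 1)
    (φ : Y → AddCircle (1 : ℝ)) (hφ : Measurable φ)
    (A : Set Y) (hA : MeasurableSet A) (hAinv : ∀ g : Fin 3 → ℤ, T g ⁻¹' A = A)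
    (hAφ : ∀ y ∈ A, ∀ v, φ (T v y) = φ y) (hA1 : ν A = 1) :
    ∃ a, φ =ᵐ[ν] Function.const Y a := by
  have hAae : ∀ᵐ y ∂ν, y ∈ A := (mem_ae_iff_prob_eq_one hA).2 hA1
  refine Filter.exists_eventuallyEq_const_of_forall_separating MeasurableSet fun U hU => ?_
  have hm : MeasurableSet (A ∩ φ ⁻¹' U) := hA.inter (hφ hU)
  have hinv : ∀ g : Fin 3 → ℤ, T g ⁻¹' (A ∩ φ ⁻¹' U) = A ∩ φ ⁻¹' U := by
    intro g
    rw [Set.preimage_inter, hAinv g]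
    ext y
    simp only [Set.mem_inter_iff, Set.mem_preimage]
    exact and_congr_right fun hy => by rw [hAφ y hy g]
  rcases herg _ hm hinv with h | h
  · right
    filter_upwards [hAae, measure_eq_zero_iff_ae_notMem.1 h] with y hy hy' hyU
    exact hy' ⟨hy, hyU⟩
  · left
    filter_upwards [(mem_ae_iff_prob_eq_one hm).2 h] with y hy
    exact hy.2

/-- If almost every orbit sequence of a measure-preserving family is equidistributed, the
distribution of `φ` is Haar measure. -/
lemma map_eq_volume_of_equidistributed
    {Y : Type*} [MeasurableSpace Y] (ν : Measure Y) [IsProbabilityMeasure ν]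
    (T : (Fin 3 → ℤ) → Y → Y)
    (hTmp : ∀ g : Fin 3 → ℤ, MeasurePreserving (T g) ν ν)
    (φ : Y → AddCircle (1 : ℝ)) (hφ : Measurable φ)
    (hae : ∀ᵐ y ∂ν, Equidistributed3 fun v => φ (T v y)) :
    ν.map φ = volume := by
  have : IsProbabilityMeasure (ν.map φ) := Measure.isProbabilityMeasure_map hφ.aemeasurable
  refine ext_of_forall_integral_eq_of_IsFiniteMeasure fun f => ?_
  rw [integral_map hφ.aemeasurable f.continuous.aestronglyMeasurable]
  have hmeas : ∀ p, Measurable fun y => f (φ (T p y)) := fun p =>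
    f.continuous.measurable.comp (hφ.comp (hTmp p).measurable)
  have hint : ∀ p, Integrable (fun y => f (φ (T p y))) ν := fun p =>
    Integrable.of_bound (hmeas p).aestronglyMeasurable ‖f‖
      (Filter.Eventually.of_forall fun y => f.norm_coe_le_norm _)
  have hinv : ∀ p, ∫ y, f (φ (T p y)) ∂ν = ∫ y, f (φ y) ∂ν := fun p => by
    have h := integral_map (μ := ν) (hTmp p).measurable.aemeasurable
      (f := fun y => f (φ y)) (f.continuous.measurable.comp hφ).aestronglyMeasurable
    rw [(hTmp p).map_eq] at h
    exact h.symm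
  have hcard : ∀ n : ℕ, ((Fintype.piFinset fun _ : Fin 3 =>
      Finset.Icc (-(n : ℤ)) (n : ℤ)).card : ℝ) = (2 * n + 1 : ℝ) ^ 3 := by
    intro n
    have h : (n : ℤ) + 1 - -(n : ℤ) = ((2 * n + 1 : ℕ) : ℤ) := by push_cast; ring
    rw [Fintype.card_piFinset_const, Int.card_Icc, h, Int.toNat_natCast]
    push_cast
    rfl
  have hlim : Filter.Tendsto (fun n : ℕ => ∫ y,
      (∑ p ∈ Fintype.piFinset fun _ : Fin 3 => Finset.Icc (-(n : ℤ)) (n : ℤ), f (φ (T p y))) /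
        ((2 * n + 1 : ℝ)) ^ 3 ∂ν) Filter.atTop (nhds (∫ _ : Y, (∫ x, f x) ∂ν)) := by
    refine tendsto_integral_of_dominated_convergence (fun _ => ‖f‖) (fun n => ?_)
      (integrable_const _) (fun n => Filter.Eventually.of_forall fun y => ?_) ?_
    · exact ((Finset.measurable_sum _ fun p _ => hmeas p).div_const _).aestronglyMeasurable
    · have hpos : (0 : ℝ) < (2 * n + 1 : ℝ) ^ 3 := by positivity
      rw [norm_div, Real.norm_of_nonneg hpos.le, div_le_iff₀ hpos, ← hcard n, mul_comm,
        ← nsmul_eq_mul]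
      exact norm_sum_le_of_le _ (fun p _ => f.norm_coe_le_norm _) |>.trans (by simp)
    · filter_upwards [hae] with y hy
      exact hy f.toContinuousMap
  have hconst : ∀ n : ℕ, ∫ y,
      (∑ p ∈ Fintype.piFinset fun _ : Fin 3 => Finset.Icc (-(n : ℤ)) (n : ℤ), f (φ (T p y))) /
        ((2 * n + 1 : ℝ)) ^ 3 ∂ν = ∫ y, f (φ y) ∂ν := by
    intro n
    have hpos : (0 : ℝ) < (2 * n + 1 : ℝ) ^ 3 := by positivity
    rw [integral_div, integral_finsetSum _ fun p _ => hint p, Finset.sum_congr rfl fun p _ => hinv p,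
      Finset.sum_const, nsmul_eq_mul, hcard n, mul_div_cancel_left₀ _ hpos.ne']
  simp only [hconst, integral_const, probReal_univ, one_smul] at hlim
  exact tendsto_nhds_unique tendsto_const_nhds hlim

theorem pure_statistics_lemma
    {Y : Type*} [MeasurableSpace Y] (ν : Measure Y) [IsProbabilityMeasure ν]
    (T : (Fin 3 → ℤ) → Y → Y)
    (hT0 : T 0 = id)
    (hTadd : ∀ g h : Fin 3 → ℤ, T (g + h) = T g ∘ T h)
    (hTmp : ∀ g : Fin 3 → ℤ, MeasurePreserving (T g) ν ν)
    (herg : ∀ A : Set Y, MeasurableSet A → (∀ g : Fin 3 → ℤ, T g ⁻¹' A = A) →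
      ν A = 0 ∨ ν A = 1)
    (φ : Y → AddCircle (1 : ℝ)) (hφ : Measurable φ)
    (hae : ∀ᵐ y ∂ν,
      (∃ c, ∀ v : Fin 3 → ℤ, φ (T v y) = c) ∨ Equidistributed3 fun v => φ (T v y)) :
    (∃ x, ν.map φ = Measure.dirac x) ∨ ν.map φ = volume := by
  have hT0' : ∀ y, T 0 y = y := fun y => by rw [hT0]; rfl
  have hTadd' : ∀ g h y, T (g + h) y = T g (T h y) := fun g h y => by rw [hTadd]; rfl
  let A : Set Y := {y | ∀ v, φ (T v y) = φ y}
  have hA : MeasurableSet A := by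
    have : A = ⋂ v, {y | φ (T v y) = φ y} := by ext; simp [A]
    rw [this]
    exact MeasurableSet.iInter fun v =>
      measurableSet_eq_fun (hφ.comp (hTmp v).measurable) hφ
  have hAinv : ∀ g : Fin 3 → ℤ, T g ⁻¹' A = A := by
    intro g
    ext y
    constructor
    · intro h v
      have h1 := h (v - g)
      have h2 := h (-g)
      rw [← hTadd', sub_add_cancel] at h1
      rw [← hTadd', neg_add_cancel, hT0'] at h2
      rw [h1, h2]
    · intro h v
      rw [← hTadd', h, h]
  rcases herg A hA hAinv with h | h
  · right
    refine map_eq_volume_of_equidistributed ν T hTmp φ hφ ?_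
    filter_upwards [hae, measure_eq_zero_iff_ae_notMem.1 h] with y hy hyA
    refine hy.resolve_left ?_
    rintro ⟨c, hc⟩
    refine hyA fun v => ?_
    rw [hc v, ← hc 0, hT0']
  · left
    obtain ⟨a, ha⟩ := exists_ae_eq_const_of_orbit_const ν T herg φ hφ A hA hAinv
      (fun y hy => hy) h
    refine ⟨a, ?_⟩
    rw [Measure.map_congr ha]
    exact (Measure.map_const ν a).trans (by simp)
end

section
/- Let (Y, 𝒴, ν) be a probability space equipped with a measure-preserving ergodic ℤ³-action and φ : Y → ℝ/ℤ a measurable function; for y ∈ Y let φ_y : ℤ³ → ℝ/ℤ be φ_y(v) = φ(v·y). Suppose that for ν-almost every y ∈ Y there is a finite-index subgroup Γ_y of ℤ³ such that the restriction of φ_y to any coset of Γ_y is either constant or equidistributed. Then there is a finite-index subgroup Γ of ℤ³ such that for every Γ-ergodic component (E, ν_E) of Y, the pushforward φ_*ν_E is either a Dirac measure or the Haar measure on ℝ/ℤ. -/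
open MeasureTheory

/-- A finite-index subgroup of `ℤ³` is isomorphic to `ℤ³`. -/
lemma exists_addEquiv_of_index_ne_zero (Γ : AddSubgroup (Fin 3 → ℤ)) (h : Γ.index ≠ 0) :
    Nonempty ((Fin 3 → ℤ) ≃+ Γ) := by
  have : Γ.FiniteIndex := ⟨h⟩
  have h3 := AddSubgroup.finrank_eq_of_finiteIndex Γ
  have : Module.Finite ℤ Γ :=
    inferInstanceAs (Module.Finite ℤ (AddSubgroup.toIntSubmodule Γ))
  have : Module.Free ℤ Γ :=
    inferInstanceAs (Module.Free ℤ (AddSubgroup.toIntSubmodule Γ))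
  exact ⟨(LinearEquiv.ofFinrankEq (Fin 3 → ℤ) Γ h3.symm).toAddEquiv⟩

lemma countable_addMonoidHom : Countable ((Fin 3 → ℤ) →+ (Fin 3 → ℤ)) := by
  refine Function.Injective.countable
    (f := fun ψ : (Fin 3 → ℤ) →+ (Fin 3 → ℤ) => fun i : Fin 3 => ψ (Pi.single i 1)) ?_
  intro ψ χ h
  refine AddMonoidHom.functions_ext _ _ _ fun i x => ?_
  have hx : (Pi.single i x : Fin 3 → ℤ) = x • Pi.single i 1 := by
    rw [← Pi.single_smul]; simp
  rw [hx, map_zsmul, map_zsmul, show ψ (Pi.single i 1) = χ (Pi.single i 1) from congrFun h i]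

/-- The average over the box `[-n, n]³` of `f` along the sequence `t`. -/
noncomputable def boxAverage (f : C(AddCircle (1 : ℝ), ℝ)) (t : (Fin 3 → ℤ) → AddCircle (1 : ℝ))
    (n : ℕ) : ℝ :=
  (∑ p ∈ Fintype.piFinset fun _ : Fin 3 => Finset.Icc (-(n : ℤ)) (n : ℤ), f (t p)) /
    ((2 * n + 1 : ℝ)) ^ 3

lemma card_box (n : ℕ) :
    (((Fintype.piFinset fun _ : Fin 3 => Finset.Icc (-(n : ℤ)) (n : ℤ)).card : ℕ) : ℝ) =
      ((2 * n + 1 : ℝ)) ^ 3 := by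
  have h : ((n : ℤ) + 1 + n).toNat = 2 * n + 1 := by omega
  simp [Fintype.card_piFinset, h]

/-- The points `y` such that on each coset `c + range ψ` the sequence `φ_y` is either constant or
equidistributed. Equidistribution is only tested against the dense sequence of
`C(ℝ/ℤ, ℝ)`, which makes the set visibly measurable. -/
def goodSet {Y : Type*} (T : (Fin 3 → ℤ) → Y → Y) (φ : Y → AddCircle (1 : ℝ))
    (ψ : (Fin 3 → ℤ) →+ (Fin 3 → ℤ)) : Set Y :=
  {y | ∀ c : Fin 3 → ℤ, (∀ v, φ (T (c + ψ v) y) = φ (T c y)) ∨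
    ∀ k : ℕ, Filter.Tendsto
      (boxAverage (TopologicalSpace.denseSeq C(AddCircle (1 : ℝ), ℝ) k)
        fun v => φ (T (c + ψ v) y))
      Filter.atTop
      (nhds (∫ x, TopologicalSpace.denseSeq C(AddCircle (1 : ℝ), ℝ) k x))}

/-- Translating the point by `g` replaces the coset of `c` by that of `c + g`. -/
lemma preimage_goodSet {Y : Type*} {T : (Fin 3 → ℤ) → Y → Y}
    (hTadd : ∀ g h : Fin 3 → ℤ, T (g + h) = T g ∘ T h) (φ : Y → AddCircle (1 : ℝ))
    (ψ : (Fin 3 → ℤ) →+ (Fin 3 → ℤ)) (g : Fin 3 → ℤ) :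
    T g ⁻¹' goodSet T φ ψ = goodSet T φ ψ := by
  have key : ∀ a y, T a (T g y) = T (a + g) y := fun a y => by rw [hTadd]; rfl
  ext y
  simp only [goodSet, Set.mem_preimage, Set.mem_ofPred_eq, key]
  constructor
  · intro h c
    have h' := h (c - g)
    simpa only [sub_add_cancel, show ∀ v, c - g + ψ v + g = c + ψ v from fun v => by abel]
      using h'
  · intro h c
    have h' := h (c + g)
    simpa only [show ∀ v, c + ψ v + g = c + g + ψ v from fun v => by abel] using h'

section

variable {Y : Type*} [MeasurableSpace Y]

lemma measurable_boxAverage {T : (Fin 3 → ℤ) → Y → Y} (hT : ∀ g, Measurable (T g))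
    {φ : Y → AddCircle (1 : ℝ)} (hφ : Measurable φ) (ψ : (Fin 3 → ℤ) →+ (Fin 3 → ℤ))
    (c : Fin 3 → ℤ) (f : C(AddCircle (1 : ℝ), ℝ)) (n : ℕ) :
    Measurable fun y => boxAverage f (fun v => φ (T (c + ψ v) y)) n := by
  unfold boxAverage
  refine Measurable.div_const (Finset.measurable_sum _ fun p _ => ?_) _
  exact f.continuous.measurable.comp (hφ.comp (hT _))

lemma measurableSet_goodSet {T : (Fin 3 → ℤ) → Y → Y} (hT : ∀ g, Measurable (T g))
    {φ : Y → AddCircle (1 : ℝ)} (hφ : Measurable φ) (ψ : (Fin 3 → ℤ) →+ (Fin 3 → ℤ)) :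
    MeasurableSet (goodSet T φ ψ) := by
  unfold goodSet
  simp only [Set.ofPred_forall, Set.ofPred_or]
  refine MeasurableSet.iInter fun c => MeasurableSet.union ?_ ?_
  · exact MeasurableSet.iInter fun v =>
      measurableSet_eq_fun (hφ.comp (hT _)) (hφ.comp (hT _))
  · refine MeasurableSet.iInter fun k => ?_
    exact measurableSet_tendsto (nhds _) fun n => measurable_boxAverage hT hφ ψ c _ n

/-- If `φ` is almost surely invariant under the maps `S i` and their common invariant sets are
trivial, then the law of `φ` is a Dirac measure. -/
lemma exists_map_eq_dirac {ι : Type*} (μ : Measure Y) [IsProbabilityMeasure μ] (S : ι → Y → Y)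
    (herg : ∀ A : Set Y, MeasurableSet A → (∀ i, S i ⁻¹' A = A) → μ A = 0 ∨ μ A = 1)
    {φ : Y → AddCircle (1 : ℝ)} (hφ : Measurable φ) {C : Set Y} (hC : MeasurableSet C)
    (hSC : ∀ i, S i ⁻¹' C = C) (hCφ : ∀ i, ∀ y ∈ C, φ (S i y) = φ y) (hC1 : μ C = 1) :
    ∃ x, μ.map φ = Measure.dirac x := by
  have hCae : ∀ᵐ y ∂μ, y ∈ C := (mem_ae_iff_prob_eq_one hC).2 hC1
  obtain ⟨x, hx⟩ := Filter.exists_eventuallyEq_const_of_forall_separating (l := ae μ) (f := φ)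
    MeasurableSet fun U hU => by
      have hA : MeasurableSet (C ∩ φ ⁻¹' U) := hC.inter (hφ hU)
      rcases herg _ hA fun i => by
        ext y
        have hm : S i y ∈ C ↔ y ∈ C := by rw [← Set.mem_preimage, hSC i]
        simp only [Set.mem_preimage, Set.mem_inter_iff, hm]
        exact and_congr_right fun hy => by rw [hCφ i y hy] with h0 | h1
      · right
        filter_upwards [hCae, measure_eq_zero_iff_ae_notMem.1 h0] with y h1 h2 h3
        exact h2 ⟨h1, h3⟩
      · left
        filter_upwards [(mem_ae_iff_prob_eq_one hA).2 h1] with y hy using hy.2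
  refine ⟨x, ?_⟩
  rw [Measure.map_congr hx]
  exact (Measure.map_const μ x).trans (by simp)

lemma continuous_integral_comp (μ : Measure Y) [IsFiniteMeasure μ]
    {φ : Y → AddCircle (1 : ℝ)} (hφ : Measurable φ) :
    Continuous fun f : C(AddCircle (1 : ℝ), ℝ) => ∫ y, f (φ y) ∂μ := by
  have hint : ∀ f : C(AddCircle (1 : ℝ), ℝ), Integrable (fun y => f (φ y)) μ := fun f =>
    Integrable.of_bound (f.continuous.measurable.comp hφ).aestronglyMeasurable ‖f‖
      (.of_forall fun y => f.norm_coe_le_norm _)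
  refine (LipschitzWith.of_dist_le_mul (K := (μ.real Set.univ).toNNReal) fun f g => ?_).continuous
  rw [dist_eq_norm, ← integral_sub (hint f) (hint g), dist_eq_norm,
    Real.coe_toNNReal _ measureReal_nonneg, mul_comm]
  exact norm_integral_le_of_norm_le_const
    (.of_forall fun y => (f - g).norm_coe_le_norm (φ y))

/-- If a measure invariant under all `T (ψ v)` gives almost every point an orbit along `range ψ`
with Haar statistics, then the law of `φ` is the Haar measure: the box averages of `f ∘ φ` all have
the same integral as `f ∘ φ`, and converge boundedly to `∫ f`. -/
lemma map_eq_volume (μ : Measure Y) [IsProbabilityMeasure μ] {T : (Fin 3 → ℤ) → Y → Y}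
    (hT : ∀ g, Measurable (T g)) (ψ : (Fin 3 → ℤ) →+ (Fin 3 → ℤ))
    (hinv : ∀ v, MeasurePreserving (T (ψ v)) μ μ)
    {φ : Y → AddCircle (1 : ℝ)} (hφ : Measurable φ)
    (hae : ∀ᵐ y ∂μ, ∀ k : ℕ, Filter.Tendsto
      (boxAverage (TopologicalSpace.denseSeq C(AddCircle (1 : ℝ), ℝ) k)
        fun v => φ (T (0 + ψ v) y))
      Filter.atTop
      (nhds (∫ x, TopologicalSpace.denseSeq C(AddCircle (1 : ℝ), ℝ) k x))) :
    μ.map φ = volume := by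
  have hdense : ∀ k : ℕ, ∫ y, TopologicalSpace.denseSeq C(AddCircle (1 : ℝ), ℝ) k (φ y) ∂μ =
      ∫ x, TopologicalSpace.denseSeq C(AddCircle (1 : ℝ), ℝ) k x := by
    intro k
    set f := TopologicalSpace.denseSeq C(AddCircle (1 : ℝ), ℝ) k
    have hfm : Measurable f := f.continuous.measurable
    have hlim : Filter.Tendsto
        (fun n : ℕ => ∫ y, boxAverage f (fun v => φ (T (0 + ψ v) y)) n ∂μ) Filter.atTop
        (nhds (∫ _, (∫ x, f x) ∂μ)) := by
      refine tendsto_integral_of_dominated_convergence (fun _ => ‖f‖)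
        (fun n => (measurable_boxAverage hT hφ ψ 0 f n).aestronglyMeasurable)
        (integrable_const _) (fun n => .of_forall fun y => ?_) ?_
      · have hpos : (0 : ℝ) < (2 * n + 1 : ℝ) ^ 3 := by positivity
        rw [boxAverage, norm_div, Real.norm_of_nonneg hpos.le, div_le_iff₀ hpos, ← card_box,
          mul_comm, ← nsmul_eq_mul]
        exact norm_sum_le_of_le _ (fun p _ => f.norm_coe_le_norm _) |>.trans (by simp)
      · filter_upwards [hae] with y hy using hy k
    have hconst : ∀ n : ℕ,
        ∫ y, boxAverage f (fun v => φ (T (0 + ψ v) y)) n ∂μ = ∫ y, f (φ y) ∂μ := by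
      intro n
      have hpos : (0 : ℝ) < (2 * n + 1 : ℝ) ^ 3 := by positivity
      have hterm : ∀ p, ∫ y, f (φ (T (0 + ψ p) y)) ∂μ = ∫ y, f (φ y) ∂μ := by
        intro p
        rw [zero_add]
        have := integral_map (μ := μ) (hT (ψ p)).aemeasurable
          (f := fun y => f (φ y)) (hfm.comp hφ).aestronglyMeasurable
        rw [(hinv p).map_eq] at this
        exact this.symm
      unfold boxAverage
      rw [integral_div, integral_finsetSum]
      · rw [Finset.sum_congr rfl fun p _ => hterm p, Finset.sum_const, nsmul_eq_mul, card_box]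
        field_simp
      · intro p _
        exact Integrable.of_bound (hfm.comp (hφ.comp (hT _))).aestronglyMeasurable ‖f‖
          (.of_forall fun y => f.norm_coe_le_norm _)
    simp only [hconst, integral_const, probReal_univ, one_smul] at hlim
    exact tendsto_nhds_unique tendsto_const_nhds hlim
  have hall : (fun f : C(AddCircle (1 : ℝ), ℝ) => ∫ y, f (φ y) ∂μ) = fun f => ∫ x, f x := by
    refine Continuous.ext_on (TopologicalSpace.denseRange_denseSeq C(AddCircle (1 : ℝ), ℝ))
      (continuous_integral_comp μ hφ) (continuous_integral_comp volume measurable_id) ?_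
    rintro _ ⟨k, rfl⟩
    exact hdense k
  have : IsProbabilityMeasure (μ.map φ) := Measure.isProbabilityMeasure_map hφ.aemeasurable
  refine ext_of_forall_integral_eq_of_IsFiniteMeasure fun f => ?_
  rw [integral_map hφ.aemeasurable f.continuous.measurable.aestronglyMeasurable]
  exact congrFun hall f.toContinuousMap

end

theorem mixed_statistics_lemma
    {Y : Type*} [MeasurableSpace Y] (ν : Measure Y) [IsProbabilityMeasure ν]
    (T : (Fin 3 → ℤ) → Y → Y)
    (hT0 : T 0 = id)
    (hTadd : ∀ g h : Fin 3 → ℤ, T (g + h) = T g ∘ T h)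
    (hTmp : ∀ g : Fin 3 → ℤ, MeasurePreserving (T g) ν ν)
    (herg : ∀ A : Set Y, MeasurableSet A → (∀ g : Fin 3 → ℤ, T g ⁻¹' A = A) →
      ν A = 0 ∨ ν A = 1)
    (φ : Y → AddCircle (1 : ℝ)) (hφ : Measurable φ)
    (hae : ∀ᵐ y ∂ν, ∃ Γy : AddSubgroup (Fin 3 → ℤ), Γy.index ≠ 0 ∧
      ∀ (c : Fin 3 → ℤ) (e : (Fin 3 → ℤ) ≃+ Γy),
        (∃ x, ∀ v : Fin 3 → ℤ, φ (T (c + ((e v : Γy) : Fin 3 → ℤ)) y) = x) ∨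
        Equidistributed3 fun v => φ (T (c + ((e v : Γy) : Fin 3 → ℤ)) y)) :
    ∃ Γ : AddSubgroup (Fin 3 → ℤ), Γ.index ≠ 0 ∧
      ∀ E : Set Y, MeasurableSet E → (∀ g ∈ Γ, T g ⁻¹' E = E) → 0 < ν E →
        (∀ A : Set Y, MeasurableSet A → (∀ g ∈ Γ, T g ⁻¹' A = A) →
          ((ν E)⁻¹ • ν.restrict E) A = 0 ∨ ((ν E)⁻¹ • ν.restrict E) A = 1) →
        ((∃ x, ((ν E)⁻¹ • ν.restrict E).map φ = Measure.dirac x) ∨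
          ((ν E)⁻¹ • ν.restrict E).map φ = volume) := by
  have hTm : ∀ g, Measurable (T g) := fun g => (hTmp g).measurable
  obtain ⟨ψ, hψ, hψ1⟩ : ∃ ψ : (Fin 3 → ℤ) →+ (Fin 3 → ℤ), ψ.range.index ≠ 0 ∧
      ν (goodSet T φ ψ) = 1 := by
    by_contra! hcon
    have hnull : ∀ ψ : (Fin 3 → ℤ) →+ (Fin 3 → ℤ), ψ.range.index ≠ 0 →
        ν (goodSet T φ ψ) = 0 := fun ψ h =>
      (herg _ (measurableSet_goodSet hTm hφ ψ) (preimage_goodSet hTadd φ ψ)).resolve_right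
        (hcon ψ h)
    have := countable_addMonoidHom
    have hnone : ∀ᵐ y ∂ν, ∀ ψ : (Fin 3 → ℤ) →+ (Fin 3 → ℤ), ψ.range.index ≠ 0 →
        y ∉ goodSet T φ ψ := by
      refine ae_all_iff.2 fun ψ => ?_
      by_cases h : ψ.range.index = 0
      · simp [h]
      · filter_upwards [measure_eq_zero_iff_ae_notMem.1 (hnull ψ h)] with y hy _ using hy
    have hfalse : ∀ᵐ _ ∂ν, False := by
      filter_upwards [hae, hnone] with y hy hno
      obtain ⟨Γ, hΓ, hdich⟩ := hy
      obtain ⟨e⟩ := exists_addEquiv_of_index_ne_zero Γ hΓ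
      have hrange : (Γ.subtype.comp e.toAddMonoidHom).range = Γ := by
        ext g
        constructor
        · rintro ⟨v, rfl⟩
          exact (e v).2
        · intro hg
          exact ⟨e.symm ⟨g, hg⟩, by simp⟩
      refine hno (Γ.subtype.comp e.toAddMonoidHom) (by rwa [hrange]) fun c => ?_
      rcases hdich c e with ⟨x, hx⟩ | heq
      · left
        intro v
        have h0 := hx 0
        simp only [map_zero, ZeroMemClass.coe_zero, add_zero] at h0
        exact (hx v).trans h0.symm
      · exact Or.inr fun k => heq _
    obtain ⟨_, h⟩ := hfalse.exists
    exact h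
  refine ⟨ψ.range, hψ, fun E hE hEinv hE0 hEerg => ?_⟩
  set μ : Measure Y := (ν E)⁻¹ • ν.restrict E with hμ
  have hprob : IsProbabilityMeasure μ := ⟨by
    simp [hμ, ENNReal.inv_mul_cancel hE0.ne' (measure_ne_top ν E)]⟩
  have hinv : ∀ v, MeasurePreserving (T (ψ v)) μ μ := by
    intro v
    have h := (hTmp (ψ v)).restrict_preimage hE
    rw [hEinv _ ⟨v, rfl⟩] at h
    exact h.smul_measure _
  have hgood : ∀ᵐ y ∂μ, y ∈ goodSet T φ ψ :=
    Measure.ae_smul_measure (ae_restrict_of_ae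
      ((mem_ae_iff_prob_eq_one (measurableSet_goodSet hTm hφ ψ)).2 hψ1)) _
  have herg' : ∀ A : Set Y, MeasurableSet A → (∀ v, T (ψ v) ⁻¹' A = A) → μ A = 0 ∨ μ A = 1 :=
    fun A hA h => hEerg A hA (by rintro _ ⟨v, rfl⟩; exact h v)
  -- The points whose sequence is constant on the subgroup itself.
  set C : Set Y := {y | ∀ v, φ (T (ψ v) y) = φ y} with hC
  have hCm : MeasurableSet C := by
    simp only [hC, Set.ofPred_forall]
    exact MeasurableSet.iInter fun v => measurableSet_eq_fun (hφ.comp (hTm _)) hφ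
  have hCinv : ∀ v, T (ψ v) ⁻¹' C = C := by
    intro w
    ext y
    have key : ∀ v, T (ψ v) (T (ψ w) y) = T (ψ (v + w)) y := fun v => by
      rw [map_add, hTadd]; rfl
    simp only [hC, Set.mem_preimage, Set.mem_ofPred_eq, key]
    constructor
    · intro h v
      have h1 := h (v - w)
      have h2 := h (-w)
      rw [sub_add_cancel] at h1
      rw [neg_add_cancel, map_zero, hT0, id] at h2
      exact h1.trans h2.symm
    · intro h v
      rw [h (v + w), h w]
  rcases herg' C hCm hCinv with h0 | h1
  · right
    refine map_eq_volume μ hTm ψ hinv hφ ?_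
    filter_upwards [hgood, measure_eq_zero_iff_ae_notMem.1 h0] with y hy hyC
    refine (hy 0).resolve_left fun h => hyC fun v => ?_
    have := h v
    rwa [zero_add, hT0, id] at this
  · left
    exact exists_map_eq_dirac μ (fun v => T (ψ v)) herg' hφ hCm hCinv (fun v y hy => hy v) h1
end

section
/- Let (Y, 𝒴, ν) be a probability space equipped with a measure-preserving ergodic ℤ³-action. If E ⊆ Y is a measurable 3-periodic set and B ⊆ E is a measurable 2-weakly periodic set, then E \ B is 2-weakly periodic. -/
/-!
The complement is cut along finitely many sets which are each periodic under a finite-index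
subgroup of `ℤ³`, in such a way that every piece only meets parts of `B` with commensurable
periods. Let `B` be partitioned into `S i`, with `S i` invariant under the rank-two group `L i`.

If `L i + L j` has rank three, the saturation `D i j = ⋃ v ∈ L j, T v ⁻¹' S i` contains `S i`, is
almost disjoint from `S j` (because `S j` is `L j`-invariant and disjoint from `S i`), and is
invariant under both `L i` and `L j` (`exists_separator`); so it is invariant under a finite-index
subgroup and separates `S i` from `S j`. On an atom `C` of the finite algebra generated by these
sets, any two parts `S i`, `S j` meeting `C` in positive measure therefore have `L i + L j` of rank
two, that is, `L i` and `L j` are commensurable. Fixing one such `i₀`, some multiple `n • L i₀`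
preserves `C`, `E` and every `C ∩ S i`, hence also `C ∩ (E \ B)`. The atoms thus cut `E \ B` into
finitely many 2-periodic sets.

Commensurability is handled by the relation `Absorbs3 L M`: a nonzero multiple of `M` lies in `L`.
Periods are handled by the submodule `stab S` of all vectors preserving `S` up to a null set.
-/

open MeasureTheory

/-- Given a measure-preserving `ℤ³`-action `T` on `(Y, ν)`, a measurable set `S` is
`i`-periodic if there is a rank-`i` subgroup `Λ` of `ℤ³` such that for every `v ∈ Λ` the
sets `v · S` and `S` agree up to a `ν`-null set. -/
def PeriodicOfRankMeas {Y : Type*} [MeasurableSpace Y] (ν : Measure Y)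
    (T : (Fin 3 → ℤ) → Y → Y) (i : ℕ) (S : Set Y) : Prop :=
  ∃ Λ : Submodule ℤ (Fin 3 → ℤ), Module.finrank ℤ Λ = i ∧
    ∀ v ∈ Λ, ν (symmDiff (T v '' S) S) = 0

/-- A measurable set `B` is `2`-weakly periodic if it can be partitioned into finitely many
measurable `2`-periodic subsets. -/
def WeaklyPeriodic2Meas {Y : Type*} [MeasurableSpace Y] (ν : Measure Y)
    (T : (Fin 3 → ℤ) → Y → Y) (B : Set Y) : Prop :=
  ∃ (k : ℕ) (parts : Fin k → Set Y),
    (∀ i, MeasurableSet (parts i)) ∧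
    (∀ i j, i ≠ j → Disjoint (parts i) (parts j)) ∧
    (⋃ i, parts i) = B ∧
    ∀ i, PeriodicOfRankMeas ν T 2 (parts i)

open Module

/-! ### Subgroups of `ℤ³` up to finite index -/

/-- A nonzero multiple of `M` is contained in `L`. For subgroups of `ℤ³` this says that `L ⊓ M` has
finite index in `M`. -/
def Absorbs3 (L M : Submodule ℤ (Fin 3 → ℤ)) : Prop :=
  ∃ n : ℤ, n ≠ 0 ∧ ∀ x ∈ M, n • x ∈ L

namespace Absorbs3

variable {L L' M M' : Submodule ℤ (Fin 3 → ℤ)}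

lemma of_le (h : M ≤ L) : Absorbs3 L M :=
  ⟨1, one_ne_zero, fun x hx => by simpa using h hx⟩

lemma mono (h : Absorbs3 L M) (hL : L ≤ L') (hM : M' ≤ M) : Absorbs3 L' M' := by
  obtain ⟨n, hn, h⟩ := h
  exact ⟨n, hn, fun x hx => hL (h x (hM hx))⟩

lemma inf (h : Absorbs3 L M) (h' : Absorbs3 L' M) : Absorbs3 (L ⊓ L') M := by
  obtain ⟨n, hn, h⟩ := h
  obtain ⟨m, hm, h'⟩ := h'
  refine ⟨n * m, mul_ne_zero hn hm, fun x hx => ⟨?_, ?_⟩⟩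
  · rw [mul_comm, mul_smul]
    exact L.smul_mem _ (h x hx)
  · rw [mul_smul]
    exact L'.smul_mem _ (h' x hx)

lemma iInf {ι : Type*} [Finite ι] {F : ι → Submodule ℤ (Fin 3 → ℤ)}
    (h : ∀ i, Absorbs3 (F i) M) : Absorbs3 (⨅ i, F i) M := by
  have := Fintype.ofFinite ι
  choose n hn h using h
  refine ⟨∏ i, n i, Finset.prod_ne_zero_iff.2 fun i _ => hn i, fun x hx => ?_⟩
  rw [Submodule.mem_iInf]
  intro i
  obtain ⟨c, hc⟩ := Finset.dvd_prod_of_mem n (Finset.mem_univ i)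
  rw [hc, mul_comm, mul_smul]
  exact (F i).smul_mem _ (h i x hx)

lemma of_finrank_eq (hle : L ≤ M) (h : finrank ℤ L = finrank ℤ M) : Absorbs3 L M := by
  have e := (Submodule.comapSubtypeEquivOfLe hle).finrank_eq
  have : Finite (M ⧸ L.comap M.subtype) :=
    (Submodule.finiteQuotient_iff _).2 (e.trans h)
  have := Fintype.ofFinite (M ⧸ L.comap M.subtype)
  refine ⟨(Fintype.card (M ⧸ L.comap M.subtype) : ℤ), by simp, fun x hx => ?_⟩
  have h0 : Fintype.card (M ⧸ L.comap M.subtype) •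
      (Submodule.Quotient.mk ⟨x, hx⟩ : M ⧸ L.comap M.subtype) = 0 := card_nsmul_eq_zero
  rw [← Submodule.Quotient.mk_smul, Submodule.Quotient.mk_eq_zero] at h0
  simpa using h0

lemma of_finrank_three (h : finrank ℤ L = 3) : Absorbs3 L ⊤ :=
  of_finrank_eq le_top (by simp [h])

/-- Two subgroups of rank two are commensurable unless together they span a space of rank three. -/
lemma of_finrank_sup (hL : finrank ℤ L = 2) (hs : finrank ℤ ↥(L ⊔ M) ≠ 3) : Absorbs3 L M := by
  have h1 : finrank ℤ L ≤ finrank ℤ ↥(L ⊔ M) := Submodule.finrank_mono le_sup_left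
  have h2 : finrank ℤ ↥(L ⊔ M) ≤ 3 := by
    simpa using Submodule.finrank_le (L ⊔ M)
  exact (of_finrank_eq (M := L ⊔ M) le_sup_left (by omega)).mono le_rfl le_sup_right

lemma exists_le (h : Absorbs3 L M) : ∃ Λ ≤ L, finrank ℤ Λ = finrank ℤ M := by
  obtain ⟨n, hn, h⟩ := h
  let f : (Fin 3 → ℤ) →ₗ[ℤ] (Fin 3 → ℤ) := LinearMap.lsmul ℤ _ n
  have hf : Function.Injective f := smul_right_injective _ hn
  refine ⟨M.map f, ?_, (M.equivMapOfInjective f hf).finrank_eq.symm⟩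
  rintro _ ⟨x, hx, rfl⟩
  exact h x hx

end Absorbs3

lemma exists_finrank_two : ∃ M : Submodule ℤ (Fin 3 → ℤ), finrank ℤ M = 2 := by
  have hli : LinearIndependent ℤ (fun i : Fin 2 => Pi.basisFun ℤ (Fin 3) i.castSucc) :=
    (Pi.basisFun ℤ (Fin 3)).linearIndependent.comp _ (Fin.castSucc_injective 2)
  exact ⟨_, (finrank_span_eq_card hli).trans (Fintype.card_fin 2)⟩

/-! ### The group of almost-everywhere periods of a set -/

lemma image_eq_preimage_neg {Y : Type*} {T : (Fin 3 → ℤ) → Y → Y} (hT0 : T 0 = id)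
    (hTadd : ∀ g h : Fin 3 → ℤ, T (g + h) = T g ∘ T h) (v : Fin 3 → ℤ) (S : Set Y) :
    T v '' S = T (-v) ⁻¹' S := by
  refine congrFun (Set.image_eq_preimage_of_inverse (fun x => ?_) (fun x => ?_)) S
  · rw [← Function.comp_apply (f := T (-v)), ← hTadd, neg_add_cancel, hT0, id]
  · rw [← Function.comp_apply (f := T v), ← hTadd, add_neg_cancel, hT0, id]

section Stab

variable {Y : Type*} [MeasurableSpace Y] {ν : Measure Y} {T : (Fin 3 → ℤ) → Y → Y}
  (hT0 : T 0 = id) (hTadd : ∀ g h : Fin 3 → ℤ, T (g + h) = T g ∘ T h)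
  (hTmp : ∀ g : Fin 3 → ℤ, MeasurePreserving (T g) ν ν)

/-- The group of all `v` with `T v ⁻¹' S = S` up to a null set. -/
def stab (S : Set Y) : Submodule ℤ (Fin 3 → ℤ) :=
  AddSubgroup.toIntSubmodule
    { carrier := {v | T v ⁻¹' S =ᵐ[ν] S}
      zero_mem' := by
        change T 0 ⁻¹' S =ᵐ[ν] S
        rw [hT0]
        exact Filter.EventuallyEq.rfl
      add_mem' := by
        intro a b ha hb
        change T (a + b) ⁻¹' S =ᵐ[ν] S
        rw [hTadd, Set.preimage_comp]
        exact ((hTmp b).quasiMeasurePreserving.preimage_ae_eq ha).trans hb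
      neg_mem' := by
        intro a ha
        change T (-a) ⁻¹' S =ᵐ[ν] S
        have h := (hTmp (-a)).quasiMeasurePreserving.preimage_ae_eq ha
        rw [← Set.preimage_comp, ← hTadd, add_neg_cancel, hT0] at h
        exact h.symm }

lemma mem_stab {S : Set Y} {v : Fin 3 → ℤ} :
    v ∈ stab hT0 hTadd hTmp S ↔ T v ⁻¹' S =ᵐ[ν] S := Iff.rfl

lemma periodic_iff {i : ℕ} {S : Set Y} :
    PeriodicOfRankMeas ν T i S ↔ ∃ Λ ≤ stab hT0 hTadd hTmp S, finrank ℤ Λ = i := by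
  have key : ∀ v, ν (symmDiff (T v '' S) S) = 0 ↔ v ∈ stab hT0 hTadd hTmp S := fun v => by
    rw [measure_symmDiff_eq_zero_iff, image_eq_preimage_neg hT0 hTadd,
      ← mem_stab hT0 hTadd hTmp, neg_mem_iff]
  simp only [PeriodicOfRankMeas, key, SetLike.le_def]
  exact exists_congr fun _ => and_comm

lemma stab_compl (S : Set Y) : stab hT0 hTadd hTmp Sᶜ = stab hT0 hTadd hTmp S := by
  ext v
  exact ae_eq_set_compl_compl

lemma stab_iInter {ι : Type*} [Countable ι] (F : ι → Set Y) :
    ⨅ i, stab hT0 hTadd hTmp (F i) ≤ stab hT0 hTadd hTmp (⋂ i, F i) := by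
  intro v hv
  rw [Submodule.mem_iInf] at hv
  rw [mem_stab, Set.preimage_iInter]
  exact Filter.EventuallyEq.countable_iInter hv

lemma stab_iUnion {ι : Type*} [Countable ι] (F : ι → Set Y) :
    ⨅ i, stab hT0 hTadd hTmp (F i) ≤ stab hT0 hTadd hTmp (⋃ i, F i) := by
  intro v hv
  rw [Submodule.mem_iInf] at hv
  rw [mem_stab, Set.preimage_iUnion]
  exact Filter.EventuallyEq.countable_iUnion hv

lemma stab_inter (S S' : Set Y) :
    stab hT0 hTadd hTmp S ⊓ stab hT0 hTadd hTmp S' ≤ stab hT0 hTadd hTmp (S ∩ S') :=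
  fun _ hv => ae_eq_set_inter hv.1 hv.2

lemma stab_preimage (S : Set Y) (w : Fin 3 → ℤ) :
    stab hT0 hTadd hTmp S ≤ stab hT0 hTadd hTmp (T w ⁻¹' S) := by
  intro v hv
  rw [mem_stab, ← Set.preimage_comp, ← hTadd, add_comm, hTadd, Set.preimage_comp]
  exact (hTmp w).quasiMeasurePreserving.preimage_ae_eq hv

lemma stab_of_null {S : Set Y} (h : ν S = 0) : stab hT0 hTadd hTmp S = ⊤ := by
  refine eq_top_iff.2 fun v _ => ?_
  have h0 : S =ᵐ[ν] (∅ : Set Y) := ae_eq_empty.2 h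
  exact ((hTmp v).quasiMeasurePreserving.preimage_ae_eq h0).trans h0.symm

/-- Saturating `S` under `L'` yields a set containing `S`, almost disjoint from `S'`, and invariant
under both `L` and `L'`. -/
lemma exists_separator {S S' : Set Y} (hS : MeasurableSet S) (hd : Disjoint S S')
    {L L' : Submodule ℤ (Fin 3 → ℤ)} (hL : L ≤ stab hT0 hTadd hTmp S)
    (hL' : L' ≤ stab hT0 hTadd hTmp S') :
    ∃ D, MeasurableSet D ∧ S ⊆ D ∧ ν (S' ∩ D) = 0 ∧ L ⊔ L' ≤ stab hT0 hTadd hTmp D := by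
  refine ⟨⋃ v : L', T v ⁻¹' S, .iUnion fun v => (hTmp v).measurable hS, ?_, ?_, sup_le ?_ ?_⟩
  · exact fun y hy => Set.mem_iUnion.2 ⟨0, by simpa [hT0] using hy⟩
  · rw [Set.inter_iUnion, measure_iUnion_null_iff]
    intro v
    have h1 : (S' ∩ T v ⁻¹' S : Set Y) =ᵐ[ν] (T v ⁻¹' S' ∩ T v ⁻¹' S : Set Y) :=
      ae_eq_set_inter (Filter.EventuallyEq.symm (hL' v.2)) Filter.EventuallyEq.rfl
    rw [measure_congr h1, ← Set.preimage_inter, hd.symm.inter_eq]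
    simp
  · exact (le_iInf fun v : L' => hL.trans (stab_preimage hT0 hTadd hTmp S v)).trans
      (stab_iUnion hT0 hTadd hTmp _)
  · -- Translating by `w ∈ L'` only permutes the sets in the union, so invariance is exact.
    intro w hw
    have h : T w ⁻¹' (⋃ v : L', T v ⁻¹' S) = ⋃ v : L', T v ⁻¹' S := by
      rw [Set.preimage_iUnion]
      refine Function.Surjective.iSup_congr _
        (Equiv.addRight (⟨w, hw⟩ : L')).surjective fun v => ?_
      simp [hTadd, Set.preimage_comp]
    exact (mem_stab hT0 hTadd hTmp).2 (Filter.EventuallyEq.of_eq h)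

end Stab

theorem complement_of_weakly_periodic_is_weakly_periodic
    {Y : Type*} [MeasurableSpace Y] (ν : Measure Y) [IsProbabilityMeasure ν]
    (T : (Fin 3 → ℤ) → Y → Y)
    (hT0 : T 0 = id)
    (hTadd : ∀ g h : Fin 3 → ℤ, T (g + h) = T g ∘ T h)
    (hTmp : ∀ g : Fin 3 → ℤ, MeasurePreserving (T g) ν ν)
    (herg : ∀ A : Set Y, MeasurableSet A → (∀ g : Fin 3 → ℤ, T g ⁻¹' A = A) →
      ν A = 0 ∨ ν A = 1)
    (E B : Set Y) (hE : MeasurableSet E) (hB : MeasurableSet B) (hBE : B ⊆ E)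
    (hE3 : PeriodicOfRankMeas ν T 3 E)
    (hB2 : WeaklyPeriodic2Meas ν T B) :
    WeaklyPeriodic2Meas ν T (E \ B) := by
  classical
  obtain ⟨k, S, hSm, hSd, hSB, hSp⟩ := hB2
  simp only [periodic_iff hT0 hTadd hTmp] at hSp
  choose L hL hL2 using hSp
  obtain ⟨LE, hLE, hLE3⟩ := (periodic_iff hT0 hTadd hTmp).1 hE3
  -- The separating sets; for pairs of parts with commensurable periods the empty set serves.
  have hD : ∀ p : Fin k × Fin k, ∃ D, MeasurableSet D ∧ Absorbs3 (stab hT0 hTadd hTmp D) ⊤ ∧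
      (p.1 ≠ p.2 → finrank ℤ ↥(L p.1 ⊔ L p.2) = 3 → S p.1 ⊆ D ∧ ν (S p.2 ∩ D) = 0) := by
    rintro ⟨i, j⟩
    by_cases h : i ≠ j ∧ finrank ℤ ↥(L i ⊔ L j) = 3
    · obtain ⟨D, h1, h2, h3, h4⟩ := exists_separator hT0 hTadd hTmp (hSm i) (hSd i j h.1)
        (hL i) (hL j)
      exact ⟨D, h1, (Absorbs3.of_finrank_three h.2).mono h4 le_rfl, fun _ _ => ⟨h2, h3⟩⟩
    · exact ⟨∅, .empty, .of_le (stab_of_null hT0 hTadd hTmp measure_empty).ge,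
        fun h1 h2 => absurd ⟨h1, h2⟩ h⟩
  choose D hDm hDa hDs using hD
  -- The atoms of the algebra generated by the separating sets, indexed by sign patterns.
  let C : (Fin k × Fin k → Bool) → Set Y := fun σ => ⋂ p, if σ p then D p else (D p)ᶜ
  have hCm : ∀ σ, MeasurableSet (C σ) := fun σ => by
    refine .iInter fun p => ?_
    split_ifs
    exacts [hDm p, (hDm p).compl]
  have hCa : ∀ σ, Absorbs3 (stab hT0 hTadd hTmp (C σ)) ⊤ := fun σ => by
    refine (Absorbs3.iInf fun p => ?_).mono (stab_iInter hT0 hTadd hTmp _) le_rfl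
    split_ifs
    · exact hDa p
    · rw [stab_compl]
      exact hDa p
  have hCmem : ∀ σ y, y ∈ C σ ↔ ∀ p, σ p = decide (y ∈ D p) := fun σ y => by
    simp only [C, Set.mem_iInter]
    refine forall_congr' fun p => ?_
    cases h : σ p <;> simp
  let e := Fintype.equivFin (Fin k × Fin k → Bool)
  refine ⟨_, fun a => C (e.symm a) ∩ (E \ B), fun a => (hCm _).inter (hE.diff hB), ?_, ?_, ?_⟩
  · intro a b hab
    refine Set.disjoint_left.2 fun y hy hy' => hab (e.symm.injective (funext fun p => ?_))
    rw [(hCmem _ y).1 hy.1 p, (hCmem _ y).1 hy'.1 p]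
  · rw [← Set.iUnion_inter]
    refine Set.inter_eq_right.2 fun y _ => Set.mem_iUnion.2
      ⟨e fun p => decide (y ∈ D p), (hCmem _ y).2 fun p => by simp⟩
  · intro a
    beta_reduce
    generalize e.symm a = σ
    -- A single rank-two group commensurable with the periods of all parts charging `C σ`.
    obtain ⟨M, hM2, hM⟩ : ∃ M : Submodule ℤ (Fin 3 → ℤ), finrank ℤ M = 2 ∧
        ∀ i, ν (C σ ∩ S i) ≠ 0 → Absorbs3 (L i) M := by
      by_cases hI : ∃ i, ν (C σ ∩ S i) ≠ 0
      · obtain ⟨i₀, hi₀⟩ := hI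
        refine ⟨L i₀, hL2 i₀, fun i hi => ?_⟩
        rcases eq_or_ne i i₀ with rfl | hne
        · exact .of_le le_rfl
        refine .of_finrank_sup (hL2 i) fun h3 => ?_
        obtain ⟨h1, h2⟩ := hDs (i, i₀) hne h3
        have hsub : C σ ⊆ if σ (i, i₀) then D (i, i₀) else (D (i, i₀))ᶜ :=
          Set.iInter_subset _ _
        split_ifs at hsub
        · exact hi₀ (measure_mono_null (t := S i₀ ∩ D (i, i₀))
            (fun y hy => ⟨hy.2, hsub hy.1⟩) h2)
        · refine hi (measure_mono_null (fun y hy => hsub hy.1 (h1 hy.2)) measure_empty)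
      · push Not at hI
        obtain ⟨M, hM⟩ := exists_finrank_two
        exact ⟨M, hM, fun i hi => absurd (hI i) hi⟩
    have hCM : Absorbs3 (stab hT0 hTadd hTmp (C σ)) M := (hCa σ).mono le_rfl le_top
    have hEM : Absorbs3 (stab hT0 hTadd hTmp E) M :=
      (Absorbs3.of_finrank_three hLE3).mono hLE le_top
    have hSM : ∀ i, Absorbs3 (stab hT0 hTadd hTmp (C σ ∩ S i)ᶜ) M := fun i => by
      rw [stab_compl]
      by_cases hi : ν (C σ ∩ S i) = 0
      · exact .of_le (by simp [stab_of_null hT0 hTadd hTmp hi])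
      · exact (hCM.inf ((hM i hi).mono (hL i) le_rfl)).mono (stab_inter hT0 hTadd hTmp _ _) le_rfl
    have hset : C σ ∩ (E \ B) = (C σ ∩ E) ∩ ⋂ i, (C σ ∩ S i)ᶜ := by
      rw [← hSB]
      ext y
      simp only [Set.mem_inter_iff, Set.mem_sdiff, Set.mem_iUnion, Set.mem_iInter,
        Set.mem_compl_iff]
      grind
    have hfin : Absorbs3 (stab hT0 hTadd hTmp (C σ ∩ (E \ B))) M := by
      rw [hset]
      exact (((hCM.inf hEM).mono (stab_inter hT0 hTadd hTmp _ _) le_rfl).inf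
        ((Absorbs3.iInf hSM).mono (stab_iInter hT0 hTadd hTmp _) le_rfl)).mono
        (stab_inter hT0 hTadd hTmp _ _) le_rfl
    obtain ⟨Λ, h1, h2⟩ := hfin.exists_le
    exact (periodic_iff hT0 hTadd hTmp).2 ⟨Λ, h1, h2.trans hM2⟩
end
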